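/- Let Ω be a bounded domain in ℝⁿ and let T : W^{-1}(Ω) → W^{1,2}_0(Ω) be the weak solution operator for the Dirichlet Laplacian. Then there exists a kernel function G(x,y) on Ω × Ω satisfying: (a) G ∈ C^∞(Ω × Ω ∖ {(x,x) : x ∈ Ω}); (b) for every y ∈ Ω and every cutoff η_y ∈ C_c^∞(Ω) with η_y ≥ 0 and η_y = 1 on B_ε(y) for some ε > 0, the function (1 − η_y)G(·,y) ∈ W^{1,2}_0(Ω); (c) G(x,y) = G(y,x) for all y ≠ x; (d) G(x,·) ∈ L¹(Ω) for every x ∈ Ω and (Tf)(x) = ∫_Ω G(x,y) f(y) dy for all f ∈ C_c^∞(Ω). -/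

import Mathlib

open MeasureTheory Metric Set Filter Bornology
open scoped ENNReal NNReal Topology RealInnerProductSpace symmDiff

noncomputable section

variable {n : ℕ}

/-- Smooth, compactly supported test functions in an open set `Ω`. -/
def IsTestFun (Ω : Set (EuclideanSpace ℝ (Fin n))) (φ : EuclideanSpace ℝ (Fin n) → ℝ) : Prop :=
  ContDiff ℝ (⊤ : ℕ∞) φ ∧ HasCompactSupport φ ∧ tsupport φ ⊆ Ω

/-- Membership in the Sobolev space `W^{1,p}(Ω)`: the function and its (a.e. defined)
gradient belong to `L^p(Ω)`. -/
def MemW1p (Ω : Set (EuclideanSpace ℝ (Fin n))) (p : ℝ≥0∞)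
    (u : EuclideanSpace ℝ (Fin n) → ℝ) : Prop :=
  MemLp u p (volume.restrict Ω) ∧ MemLp (fun x => gradient u x) p (volume.restrict Ω)

/-- Membership in `W^{1,p}_0(Ω)`: membership in `W^{1,p}(Ω)` together with zero boundary
trace, expressed as approximability by test functions in the `W^{1,p}` norm. -/
def MemW1p0 (Ω : Set (EuclideanSpace ℝ (Fin n))) (p : ℝ≥0∞)
    (u : EuclideanSpace ℝ (Fin n) → ℝ) : Prop :=
  MemW1p Ω p u ∧ ∃ φ : ℕ → EuclideanSpace ℝ (Fin n) → ℝ,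
    (∀ k, IsTestFun Ω (φ k)) ∧
    Tendsto (fun k => eLpNorm (fun x => u x - φ k x) p (volume.restrict Ω)
        + eLpNorm (fun x => gradient u x - gradient (φ k) x) p (volume.restrict Ω))
      atTop (nhds 0)

/-- Membership in `W^{1,2}_0(Ω)`. -/
def MemW120 (Ω : Set (EuclideanSpace ℝ (Fin n))) (u : EuclideanSpace ℝ (Fin n) → ℝ) : Prop :=
  MemW1p0 Ω 2 u

/-- `Δ u = f` holds weakly in `Ω`:
`∫_Ω ∇u · ∇φ = - ∫_Ω f φ` for all test functions `φ ∈ C_c^∞(Ω)`. -/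
def WeakLapEq (Ω : Set (EuclideanSpace ℝ (Fin n))) (f u : EuclideanSpace ℝ (Fin n) → ℝ) : Prop :=
  ∀ φ : EuclideanSpace ℝ (Fin n) → ℝ, IsTestFun Ω φ →
    ∫ x in Ω, ⟪gradient u x, gradient φ x⟫ = - ∫ x in Ω, f x * φ x

/-- `u = OS(g, ψ)` is the obstacle problem solution in `D` with Laplacian data `g` and
boundary data `ψ`: a nonnegative `W^{1,2}(D)` function with `Δu = χ_{{u>0}} g` weakly in `D`
and `u = ψ` on `∂D` (attained continuously). -/
structure IsObstacleSol (D : Set (EuclideanSpace ℝ (Fin n)))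
    (g ψ u : EuclideanSpace ℝ (Fin n) → ℝ) : Prop where
  nonneg : ∀ x ∈ D, 0 ≤ u x
  sobolev : MemW1p D 2 u
  weakEq : WeakLapEq D (Set.indicator {y | 0 < u y} g) u
  contOn : ContinuousOn u (closure D)
  bdry : Set.EqOn u ψ (frontier D)

/-- The contact set `Λ(u) = {x ∈ D : u(x) = 0}`. -/
def contactSet (D : Set (EuclideanSpace ℝ (Fin n)))
    (u : EuclideanSpace ℝ (Fin n) → ℝ) : Set (EuclideanSpace ℝ (Fin n)) :=
  {x ∈ D | u x = 0}

/-- The non-contact set `Ω(u) = {x ∈ D : u(x) > 0}`. -/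
def noncontactSet (D : Set (EuclideanSpace ℝ (Fin n)))
    (u : EuclideanSpace ℝ (Fin n) → ℝ) : Set (EuclideanSpace ℝ (Fin n)) :=
  {x ∈ D | 0 < u x}

/-- `D_{-η} = {x ∈ D : dist(x, ∂D) ≥ η}`. -/
def innerDomain (D : Set (EuclideanSpace ℝ (Fin n))) (η : ℝ) : Set (EuclideanSpace ℝ (Fin n)) :=
  {x ∈ D | η ≤ infDist x (frontier D)}

/-- A bounded Lipschitz domain: a bounded open set whose boundary is locally, after a rigid
motion, the graph of a Lipschitz function (with the domain lying on one side). -/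
def IsLipschitzDomain (D : Set (EuclideanSpace ℝ (Fin n))) : Prop :=
  IsOpen D ∧ IsBounded D ∧
    ∀ x ∈ frontier D,
      ∃ (U : Set (EuclideanSpace ℝ (Fin n)))
        (e : EuclideanSpace ℝ (Fin n) ≃ᵢ EuclideanSpace ℝ (Fin n))
        (φ : (Fin n → ℝ) → ℝ) (L : ℝ≥0) (j : Fin n),
        x ∈ U ∧ IsOpen U ∧ LipschitzWith L φ ∧
        ∀ y ∈ U, (y ∈ D ↔
          φ (Function.update ((EuclideanSpace.equiv (Fin n) ℝ) (e y)) j 0)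
            < (EuclideanSpace.equiv (Fin n) ℝ) (e y) j)

/-- `G` is a Dirichlet Green's function for `D`: for smooth compactly supported right hand
sides, the (continuous representative of the) weak solution of the homogeneous Dirichlet
problem is represented by integration against `G`. -/
def IsGreenFunction (D : Set (EuclideanSpace ℝ (Fin n)))
    (G : EuclideanSpace ℝ (Fin n) → EuclideanSpace ℝ (Fin n) → ℝ) : Prop :=
  ∀ f, IsTestFun D f → ∀ u, MemW120 D u → WeakLapEq D f u → ContinuousOn u D →
    ∀ x ∈ D, u x = ∫ y in D, G x y * f y

/-- `f` is harmonic on `D`: twice differentiable with vanishing Laplacian at each point. -/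
def IsHarmonicOn (f : EuclideanSpace ℝ (Fin n) → ℝ) (D : Set (EuclideanSpace ℝ (Fin n))) : Prop :=
  (∀ x ∈ D, ContDiffAt ℝ 2 f x) ∧
    ∀ x ∈ D, ∑ i : Fin n,
      iteratedFDeriv ℝ 2 f x ![EuclideanSpace.single i 1, EuclideanSpace.single i 1] = 0

/-- `Ξ` is the harmonic extension of the boundary data `φ` to `D`. -/
def IsHarmonicExtension (D : Set (EuclideanSpace ℝ (Fin n)))
    (φ Ξ : EuclideanSpace ℝ (Fin n) → ℝ) : Prop :=
  ContinuousOn Ξ (closure D) ∧ IsHarmonicOn Ξ D ∧ Set.EqOn Ξ φ (frontier D)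

/-- `K` is the Poisson kernel of `D` (with respect to surface measure, i.e. `(n-1)`-dimensional
Hausdorff measure on `∂D`): every harmonic extension of continuous boundary data is recovered
by integrating the boundary data against `K` over `∂D`. -/
def IsPoissonKernel (D : Set (EuclideanSpace ℝ (Fin n)))
    (K : EuclideanSpace ℝ (Fin n) → EuclideanSpace ℝ (Fin n) → ℝ) : Prop :=
  ∀ φ, ContinuousOn φ (frontier D) → ∀ Ξ, IsHarmonicExtension D φ Ξ →
    ∀ y ∈ D, Ξ y = ∫ x in frontier D, φ x * K y x ∂μH[(n : ℝ) - 1]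

local notation "𝔼" => EuclideanSpace ℝ (Fin n)

theorem testFun_add {Ω : Set 𝔼} {φ ψ : 𝔼 → ℝ} (h1 : IsTestFun Ω φ) (h2 : IsTestFun Ω ψ) :
    IsTestFun Ω (φ + ψ) :=
  ⟨h1.1.add h2.1, h1.2.1.add h2.2.1,
    (tsupport_add φ ψ).trans (union_subset h1.2.2 h2.2.2)⟩

theorem testFun_mul {Ω : Set 𝔼} {a φ : 𝔼 → ℝ} (ha : ContDiff ℝ (⊤ : ℕ∞) a)
    (h : IsTestFun Ω φ) : IsTestFun Ω (fun x => a x * φ x) :=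
  ⟨ha.mul h.1, h.2.1.mul_left, (tsupport_mul_subset_right).trans h.2.2⟩

theorem testFun_zero {Ω : Set 𝔼} : IsTestFun Ω (0 : 𝔼 → ℝ) :=
  ⟨contDiff_const, HasCompactSupport.zero, by simp⟩

/-- The vector space of test functions. -/
def TF (Ω : Set 𝔼) : Submodule ℝ (𝔼 → ℝ) where
  carrier := {φ | IsTestFun Ω φ}
  add_mem' := testFun_add
  zero_mem' := testFun_zero
  smul_mem' := fun _ _ h => testFun_mul contDiff_const h

theorem testFun_memLp {Ω : Set 𝔼} {φ : 𝔼 → ℝ} (h : IsTestFun Ω φ) (p : ℝ≥0∞)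
    (s : Set 𝔼) : MemLp φ p (volume.restrict s) :=
  (h.1.continuous.memLp_of_hasCompactSupport h.2.1).restrict s

theorem testFun_grad_cont {φ : 𝔼 → ℝ} (h : ContDiff ℝ (⊤ : ℕ∞) φ) :
    Continuous (fun x => gradient φ x) :=
  (InnerProductSpace.toDual ℝ 𝔼).symm.continuous.comp (h.continuous_fderiv (by simp))

theorem testFun_grad_supp {φ : 𝔼 → ℝ} (h : HasCompactSupport φ) :
    HasCompactSupport (fun x => gradient φ x) :=
  (h.fderiv (𝕜 := ℝ)).comp_left (g := (InnerProductSpace.toDual ℝ 𝔼).symm) (map_zero _)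

theorem testFun_grad_memLp {Ω : Set 𝔼} {φ : 𝔼 → ℝ} (h : IsTestFun Ω φ) (p : ℝ≥0∞)
    (s : Set 𝔼) : MemLp (fun x => gradient φ x) p (volume.restrict s) :=
  ((testFun_grad_cont h.1).memLp_of_hasCompactSupport (testFun_grad_supp h.2.1)).restrict s

theorem testFun_differentiable {Ω : Set 𝔼} {φ : 𝔼 → ℝ} (h : IsTestFun Ω φ) :
    Differentiable ℝ φ := h.1.differentiable (by simp)

theorem inner_gradient {φ : 𝔼 → ℝ} (x v : 𝔼) : ⟪gradient φ x, v⟫ = fderiv ℝ φ x v := by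
  simp [gradient]

theorem grad_add' {φ ψ : 𝔼 → ℝ} {x : 𝔼} (h1 : DifferentiableAt ℝ φ x)
    (h2 : DifferentiableAt ℝ ψ x) : gradient (φ + ψ) x = gradient φ x + gradient ψ x := by
  simp [gradient, fderiv_add h1 h2]

theorem grad_smul' {φ : 𝔼 → ℝ} {x : 𝔼} (c : ℝ) (h1 : DifferentiableAt ℝ φ x) :
    gradient (c • φ) x = c • gradient φ x := by
  simp [gradient, fderiv_const_smul h1]

/-- A test function as an element of `L²(Ω)`. -/
def tL (Ω : Set 𝔼) : TF Ω →ₗ[ℝ] Lp ℝ 2 (volume.restrict Ω) where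
  toFun φ := (testFun_memLp φ.2 2 Ω).toLp φ.1
  map_add' _ _ := MemLp.toLp_add _ _
  map_smul' c _ := MemLp.toLp_const_smul c _

/-- The gradient of a test function as an element of `L²(Ω; ℝⁿ)`. -/
def gL (Ω : Set 𝔼) : TF Ω →ₗ[ℝ] Lp 𝔼 2 (volume.restrict Ω) where
  toFun φ := (testFun_grad_memLp φ.2 2 Ω).toLp (fun x => gradient φ.1 x)
  map_add' φ ψ := by
    rw [← MemLp.toLp_add]
    apply MemLp.toLp_congr
    refine Eventually.of_forall fun x => ?_
    exact grad_add' (testFun_differentiable φ.2 x) (testFun_differentiable ψ.2 x)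
  map_smul' c φ := by
    rw [RingHom.id_apply, ← MemLp.toLp_const_smul]
    apply MemLp.toLp_congr
    refine Eventually.of_forall fun x => ?_
    exact grad_smul' c (testFun_differentiable φ.2 x)

theorem inner_toLp {F : Type*} [NormedAddCommGroup F] [InnerProductSpace ℝ F]
    {μ : Measure 𝔼} {f g : 𝔼 → F} (hf : MemLp f 2 μ) (hg : MemLp g 2 μ) :
    ⟪hf.toLp f, hg.toLp g⟫ = ∫ x, ⟪f x, g x⟫ ∂μ := by
  rw [L2.inner_def]
  apply integral_congr_ae
  filter_upwards [hf.coeFn_toLp, hg.coeFn_toLp] with x h1 h2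
  rw [h1, h2]

theorem norm_sq_toLp {F : Type*} [NormedAddCommGroup F] [InnerProductSpace ℝ F]
    {μ : Measure 𝔼} {f : 𝔼 → F} (hf : MemLp f 2 μ) :
    ‖hf.toLp f‖ ^ 2 = ∫ x, ‖f x‖ ^ 2 ∂μ := by
  rw [← real_inner_self_eq_norm_sq, inner_toLp]
  simp_rw [real_inner_self_eq_norm_sq]

theorem setIntegral_eq_of_tsupport {F : Type*} [NormedAddCommGroup F] [NormedSpace ℝ F]
    {Ω : Set 𝔼} {f : 𝔼 → F} {φ : 𝔼 → ℝ} (hφ : tsupport φ ⊆ Ω)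
    (h : ∀ x, x ∉ tsupport φ → f x = 0) : ∫ x in Ω, f x = ∫ x, f x :=
  setIntegral_eq_integral_of_forall_compl_eq_zero fun x hx => h x fun h' => hx (hφ h')

theorem gradient_eq_zero_of_notMem {φ : 𝔼 → ℝ} {x : 𝔼} (hx : x ∉ tsupport φ) :
    gradient φ x = 0 := by
  have : fderiv ℝ φ x = 0 := by
    by_contra h
    exact hx (support_fderiv_subset ℝ h)
  simp [gradient, this]

theorem poincare_aux (hn : 0 < n) {Ω : Set 𝔼} {R : ℝ} (hR : ∀ x ∈ Ω, ‖x‖ ≤ R)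
    {φ : 𝔼 → ℝ} (h : IsTestFun Ω φ) :
    ∫ x in Ω, ‖φ x‖ ^ 2 ≤ 4 * R ^ 2 * ∫ x in Ω, ‖gradient φ x‖ ^ 2 := by
  set i : Fin n := ⟨0, hn⟩
  set e : 𝔼 := EuclideanSpace.single i 1 with he
  have hd := testFun_differentiable h
  have i1 : Integrable (fun x => ‖φ x‖ ^ 2) (volume.restrict Ω) :=
    (testFun_memLp h 2 Ω).integrable_norm_pow (by norm_num)
  have i2 : Integrable (fun x => ‖gradient φ x‖ ^ 2) (volume.restrict Ω) :=
    (testFun_grad_memLp h 2 Ω).integrable_norm_pow (by norm_num)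
  have hfd : ∀ x, fderiv ℝ (fun x => φ x ^ 2) x e = 2 * φ x * fderiv ℝ φ x e := by
    intro x
    have := ((hd x).hasFDerivAt.pow 2).fderiv
    rw [this]; simp
  have hgd : ∀ x : 𝔼, fderiv ℝ (fun x : 𝔼 => x i) x e = 1 := by
    intro x
    have : HasFDerivAt (fun x : 𝔼 => x i) (EuclideanSpace.proj i : 𝔼 →L[ℝ] ℝ) x :=
      (EuclideanSpace.proj i : 𝔼 →L[ℝ] ℝ).hasFDerivAt
    rw [this.fderiv]; simp [he]
  have hci : Continuous (fun x : 𝔼 => x i) := by fun_prop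
  have hdc : Continuous (fun x => fderiv ℝ φ x e) :=
    (h.1.continuous_fderiv (by simp)).clm_apply continuous_const
  have ibp := integral_mul_fderiv_eq_neg_fderiv_mul_of_integrable (μ := (volume : Measure 𝔼))
    (f := fun x => φ x ^ 2) (g := fun x => x i) (v := e)
    (by
      simp_rw [hfd]
      apply Continuous.integrable_of_hasCompactSupport
      · exact ((continuous_const.mul h.1.continuous).mul hdc).mul hci
      · refine h.2.1.mono ?_
        intro x hx h0
        simp at hx
        exact hx.1.1 h0)
    (by
      simp_rw [hgd]
      apply Continuous.integrable_of_hasCompactSupport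
      · exact (h.1.continuous.pow 2).mul continuous_const
      · refine h.2.1.mono ?_
        intro x hx h0
        simp at hx
        exact hx h0)
    (by
      apply Continuous.integrable_of_hasCompactSupport
      · exact (h.1.continuous.pow 2).mul hci
      · refine h.2.1.mono ?_
        intro x hx h0
        simp at hx
        exact hx.1 h0)
    (fun x _ => (hd x).pow 2)
    (fun x _ => by fun_prop)
  simp_rw [hfd, hgd, mul_one] at ibp
  rw [← setIntegral_eq_of_tsupport (φ := φ) h.2.2
      (fun x hx => by simp [image_eq_zero_of_notMem_tsupport hx]),
    ← setIntegral_eq_of_tsupport (φ := φ) h.2.2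
      (fun x hx => by simp [image_eq_zero_of_notMem_tsupport hx]), ← integral_neg] at ibp
  have key : ∫ x in Ω, -(2 * φ x * fderiv ℝ φ x e * x i) ≤
      ∫ x in Ω, (1/2 * ‖φ x‖ ^ 2 + 2 * R ^ 2 * ‖gradient φ x‖ ^ 2) := by
    refine integral_mono ?_ ((i1.const_mul _).add (i2.const_mul _)) fun x => ?_
    · apply Integrable.neg
      apply Integrable.restrict
      apply Continuous.integrable_of_hasCompactSupport
      · exact ((continuous_const.mul h.1.continuous).mul hdc).mul hci
      · refine h.2.1.mono ?_
        intro x hx h0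
        simp at hx
        exact hx.1.1 h0
    · simp only
      by_cases hx : x ∈ Ω
      · have h1 : |x i| ≤ R := (PiLp.norm_apply_le x i).trans (hR x hx)
        have h2 : |fderiv ℝ φ x e| ≤ ‖gradient φ x‖ := by
          rw [← inner_gradient]
          refine (abs_real_inner_le_norm _ _).trans ?_
          simp [he]
        have h3 : |fderiv ℝ φ x e * x i| ≤ ‖gradient φ x‖ * R := by
          rw [abs_mul]; gcongr
        have h4 : (fderiv ℝ φ x e * x i) ^ 2 ≤ (‖gradient φ x‖ * R) ^ 2 :=
          sq_le_sq' (by linarith [(abs_le.1 h3).1]) (abs_le.1 h3).2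
        have h5 : ‖φ x‖ ^ 2 = φ x ^ 2 := by simp
        rw [h5]
        nlinarith [sq_nonneg (φ x + 2 * (fderiv ℝ φ x e * x i))]
      · have : φ x = 0 := image_eq_zero_of_notMem_tsupport fun h' => hx (h.2.2 h')
        rw [this]; simp; positivity
  rw [integral_add (i1.const_mul _) (i2.const_mul _), integral_const_mul, integral_const_mul] at key
  have e1 : ∫ x in Ω, ‖φ x‖ ^ 2 = ∫ x in Ω, φ x ^ 2 := by simp
  linarith

theorem tL_apply {Ω : Set 𝔼} (φ : TF Ω) :
    tL Ω φ = (testFun_memLp φ.2 2 Ω).toLp φ.1 := rfl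

theorem gL_apply {Ω : Set 𝔼} (φ : TF Ω) :
    gL Ω φ = (testFun_grad_memLp φ.2 2 Ω).toLp (fun x => gradient φ.1 x) := rfl

theorem poincare (hn : 0 < n) {Ω : Set 𝔼} (hb : IsBounded Ω) :
    ∃ C, ∀ φ : TF Ω, ‖tL Ω φ‖ ≤ C * ‖gL Ω φ‖ := by
  obtain ⟨R, hR0, hR⟩ := hb.exists_pos_norm_le
  refine ⟨2 * R, fun φ => ?_⟩
  refine (sq_le_sq₀ (by positivity) (by positivity)).1 ?_
  have := poincare_aux hn hR φ.2
  rw [mul_pow]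
  rw [tL_apply, gL_apply, norm_sq_toLp, norm_sq_toLp]
  linarith

/-- `u` is the weak solution with data `f`, and `w` is its gradient. -/
structure IsSol (Ω : Set 𝔼) (f u : Lp ℝ 2 (volume.restrict Ω))
    (w : Lp 𝔼 2 (volume.restrict Ω)) : Prop where
  approx : ∃ φ : ℕ → TF Ω, Tendsto (fun k => tL Ω (φ k)) atTop (𝓝 u) ∧
    Tendsto (fun k => gL Ω (φ k)) atTop (𝓝 w)
  weak : ∀ v : TF Ω, ⟪w, gL Ω v⟫ = ⟪f, tL Ω v⟫

theorem isSol_unique (hn : 0 < n) {Ω : Set 𝔼} (hb : IsBounded Ω)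
    {f u u' : Lp ℝ 2 (volume.restrict Ω)} {w w' : Lp 𝔼 2 (volume.restrict Ω)}
    (h : IsSol Ω f u w) (h' : IsSol Ω f u' w') : u = u' := by
  obtain ⟨C, hC⟩ := poincare hn hb
  obtain ⟨φ, h1, h2⟩ := h.approx
  obtain ⟨φ', h1', h2'⟩ := h'.approx
  have t1 : Tendsto (fun k => tL Ω (φ k - φ' k)) atTop (𝓝 (u - u')) := by
    simpa using h1.sub h1'
  have t2 : Tendsto (fun k => gL Ω (φ k - φ' k)) atTop (𝓝 (w - w')) := by
    simpa using h2.sub h2'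
  have hz : ∀ v : TF Ω, ⟪w - w', gL Ω v⟫ = 0 := fun v => by
    rw [inner_sub_left, h.weak, h'.weak, sub_self]
  have hw : ⟪w - w', w - w'⟫ = 0 := by
    have : Tendsto (fun k => ⟪w - w', gL Ω (φ k - φ' k)⟫) atTop (𝓝 ⟪w - w', w - w'⟫) :=
      tendsto_const_nhds.inner t2
    simp_rw [hz] at this
    exact tendsto_nhds_unique this tendsto_const_nhds
  rw [inner_self_eq_zero] at hw
  rw [hw] at t2
  have t3 : Tendsto (fun k => tL Ω (φ k - φ' k)) atTop (𝓝 0) := by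
    refine squeeze_zero_norm (fun k => hC _) ?_
    simpa using t2.norm.const_mul C
  exact sub_eq_zero.1 (tendsto_nhds_unique t1 t3)

theorem abstract_solution_operator {X H K : Type*} [AddCommGroup X] [Module ℝ X]
    [NormedAddCommGroup H] [InnerProductSpace ℝ H] [CompleteSpace H]
    [NormedAddCommGroup K] [InnerProductSpace ℝ K] [CompleteSpace K]
    (t : X →ₗ[ℝ] H) (g : X →ₗ[ℝ] K) (C : ℝ) (hC : ∀ x, ‖t x‖ ≤ C * ‖g x‖) :
    ∃ S : H →L[ℝ] H, (∀ f f', ⟪S f, f'⟫ = ⟪f, S f'⟫) ∧ ∀ f, ∃ w : K,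
      (∃ φ : ℕ → X, Tendsto (fun k => t (φ k)) atTop (𝓝 (S f)) ∧
        Tendsto (fun k => g (φ k)) atTop (𝓝 w)) ∧ ∀ v, ⟪w, g v⟫ = ⟪f, t v⟫ := by
  let W : Submodule ℝ K := (LinearMap.range g).topologicalClosure
  have hcomp : CompleteSpace W :=
    (Submodule.isClosed_topologicalClosure _).completeSpace_coe
  have hmem : ∀ φ, g φ ∈ W := fun φ =>
    Submodule.le_topologicalClosure _ (LinearMap.mem_range_self _ φ)
  let e : X →ₗ[ℝ] W := g.codRestrict W hmem
  have hdense : DenseRange e := by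
    intro w
    have hw : (w : K) ∈ closure (range g) := by
      have := w.2
      rw [← SetLike.mem_coe] at this
      change (w : K) ∈ ((LinearMap.range g).topologicalClosure : Set K) at this
      rwa [Submodule.topologicalClosure_coe, LinearMap.coe_range] at this
    rw [closure_subtype]
    refine closure_mono ?_ hw
    rintro _ ⟨φ, rfl⟩
    exact ⟨e φ, ⟨φ, rfl⟩, rfl⟩
  let P : W →L[ℝ] H := t.extendOfNorm e
  have hPe : ∀ φ, P (e φ) = t φ := fun φ =>
    LinearMap.extendOfNorm_eq hdense ⟨C, fun x => hC x⟩ φ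
  refine ⟨P ∘L ContinuousLinearMap.adjoint P, fun f f' => ?_, fun f => ?_⟩
  · rw [ContinuousLinearMap.comp_apply, ContinuousLinearMap.comp_apply]
    exact (ContinuousLinearMap.adjoint_inner_right P _ _).symm.trans
      (ContinuousLinearMap.adjoint_inner_left P _ _)
  · let w : W := ContinuousLinearMap.adjoint P f
    refine ⟨w, ?_, fun v => ?_⟩
    · have hcl : w ∈ closure (range e) := hdense w
      obtain ⟨x, hx, hxt⟩ := mem_closure_iff_seq_limit.1 hcl
      choose φ hφ using hx
      refine ⟨φ, ?_, ?_⟩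
      · have := (P.continuous.tendsto w).comp hxt
        refine this.congr fun k => ?_
        rw [Function.comp_apply, ← hφ, hPe]
      · have := (continuous_subtype_val.tendsto w).comp hxt
        refine this.congr fun k => ?_
        rw [Function.comp_apply, ← hφ]
        rfl
    · have h1 : ⟪w, e v⟫ = ⟪f, P (e v)⟫ := ContinuousLinearMap.adjoint_inner_left P (e v) f
      rw [hPe] at h1
      exact h1

theorem exists_solution_operator (hn : 0 < n) {Ω : Set 𝔼} (hb : IsBounded Ω) :
    ∃ S : Lp ℝ 2 (volume.restrict Ω) →L[ℝ] Lp ℝ 2 (volume.restrict Ω),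
      (∀ f g, ⟪S f, g⟫ = ⟪f, S g⟫) ∧ ∀ f, ∃ w, IsSol Ω f (S f) w := by
  obtain ⟨C, hC⟩ := poincare hn hb
  obtain ⟨S, h1, h2⟩ := abstract_solution_operator (tL Ω) (gL Ω) C hC
  refine ⟨S, h1, fun f => ?_⟩
  obtain ⟨w, hw, hw'⟩ := h2 f
  exact ⟨w, ⟨hw, hw'⟩⟩

/-- A pair of radial kernels with `∇ψ = - x ρ`. -/
structure Ker (ρ ψ : 𝔼 → ℝ) : Prop where
  smooth : ContDiff ℝ (⊤ : ℕ∞) ρ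
  smooth' : ContDiff ℝ (⊤ : ℕ∞) ψ
  supp : ∀ z, 1 < ‖z‖ → ρ z = 0
  supp' : ∀ z, 1 < ‖z‖ → ψ z = 0
  mass : ∫ z, ρ z = 1
  grad : ∀ z, HasFDerivAt ψ (-(ρ z • innerSL ℝ z)) z

theorem compactSupport_of_ball {F : Type*} [Zero F] {f : 𝔼 → F} (h : ∀ z, 1 < ‖z‖ → f z = 0) :
    HasCompactSupport f :=
  HasCompactSupport.intro (isCompact_closedBall (0 : 𝔼) 1) fun x hx => h x (by simpa using hx)

theorem exists_ker (hn : 0 < n) : ∃ ρ ψ : 𝔼 → ℝ, Ker ρ ψ := by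
  let g : ℝ → ℝ := fun q => Real.smoothTransition (1 - q)
  have hg : ContDiff ℝ (⊤ : ℕ∞) g :=
    Real.smoothTransition.contDiff.comp (contDiff_const.sub contDiff_id)
  have hg' : ContDiff ℝ (⊤ : ℕ∞) (deriv g) := by
    have : ContDiff ℝ ((⊤ : ℕ∞) + 1) g := by simpa using hg
    exact (contDiff_succ_iff_deriv.1 this).2.2
  have hg0 : ∀ q, 1 ≤ q → g q = 0 := fun q hq =>
    Real.smoothTransition.zero_of_nonpos (by linarith)
  have hgd : Differentiable ℝ g := hg.differentiable (by simp)
  have hanti : Antitone g := fun a b hab =>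
    Real.smoothTransition.monotone (by linarith)
  have hd0 : ∀ q, 1 < q → deriv g q = 0 := by
    intro q hq
    have : g =ᶠ[𝓝 q] fun _ => 0 := by
      filter_upwards [lt_mem_nhds hq] with y hy using hg0 y hy.le
    rw [this.deriv_eq]; simp
  let ρ0 : 𝔼 → ℝ := fun z => -2 * deriv g (‖z‖ ^ 2)
  have hρ0 : ContDiff ℝ (⊤ : ℕ∞) ρ0 := contDiff_const.mul (hg'.comp (contDiff_norm_sq ℝ))
  have hsupp : ∀ z, 1 < ‖z‖ → ρ0 z = 0 := by
    intro z hz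
    simp only [ρ0]
    rw [hd0 _ (by nlinarith)]; simp
  have hnn : ∀ z, 0 ≤ ρ0 z := by
    intro z
    have := hanti.deriv_nonpos (x := ‖z‖ ^ 2)
    simp only [ρ0]; linarith
  have hpos : 0 < ∫ z, ρ0 z := by
    obtain ⟨q, hq, hq'⟩ := exists_deriv_eq_slope g (zero_lt_one) hgd.continuous.continuousOn
      hgd.differentiableOn
    have hq1 : deriv g q = -1 := by
      rw [hq']
      simp [g]
    refine hρ0.continuous.integral_pos_of_hasCompactSupport_nonneg_nonzero
      (compactSupport_of_ball hsupp) hnn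
      (x := EuclideanSpace.single ⟨0, hn⟩ (Real.sqrt q)) ?_
    simp only [ρ0]
    simp [Real.sq_sqrt hq.1.le, hq1]
  set c := ∫ z, ρ0 z with hc
  refine ⟨fun z => c⁻¹ * ρ0 z, fun z => c⁻¹ * g (‖z‖ ^ 2), ?_, ?_, ?_, ?_, ?_, ?_⟩
  · exact contDiff_const.mul hρ0
  · exact contDiff_const.mul (hg.comp (contDiff_norm_sq ℝ))
  · intro z hz; rw [hsupp z hz, mul_zero]
  · intro z hz; rw [hg0 _ (by nlinarith), mul_zero]
  · rw [integral_const_mul, ← hc, inv_mul_cancel₀ hpos.ne']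
  · intro z
    have h1 : HasFDerivAt (fun z : 𝔼 => ‖z‖ ^ 2) (2 • (innerSL ℝ z)) z :=
      (hasStrictFDerivAt_norm_sq z).hasFDerivAt
    have h2 := ((hgd (‖z‖ ^ 2)).hasDerivAt.comp_hasFDerivAt z h1).const_mul c⁻¹
    refine h2.congr_fderiv ?_
    ext v
    simp [ρ0]
    ring

/-- Rescaled kernel centred at `x`. -/
def sc (ρ : 𝔼 → ℝ) (t : ℝ) (x z : 𝔼) : ℝ := (t ^ n)⁻¹ * ρ (t⁻¹ • (z - x))

theorem sc_contDiff {ρ : 𝔼 → ℝ} (h : ContDiff ℝ (⊤ : ℕ∞) ρ) (t : ℝ) (x : 𝔼) :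
    ContDiff ℝ (⊤ : ℕ∞) (sc ρ t x) :=
  contDiff_const.mul (h.comp ((contDiff_id.sub contDiff_const).const_smul t⁻¹))

theorem sc_eq_zero {ρ : 𝔼 → ℝ} (h : ∀ z, 1 < ‖z‖ → ρ z = 0) {t : ℝ} (ht : 0 < t) {x z : 𝔼}
    (hz : z ∉ closedBall x t) : sc ρ t x z = 0 := by
  rw [sc, h, mul_zero]
  rw [mem_closedBall, dist_eq_norm, not_le] at hz
  rw [norm_smul, norm_inv, Real.norm_of_nonneg ht.le, ← div_eq_inv_mul, one_lt_div ht]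
  exact hz

theorem sc_testFun {ρ : 𝔼 → ℝ} (hs : ContDiff ℝ (⊤ : ℕ∞) ρ)
    (h : ∀ z, 1 < ‖z‖ → ρ z = 0) {t : ℝ} (ht : 0 < t) {x : 𝔼} {Ω : Set 𝔼}
    (hx : closedBall x t ⊆ Ω) : IsTestFun Ω (sc ρ t x) := by
  refine ⟨sc_contDiff hs t x, HasCompactSupport.intro (isCompact_closedBall x t)
    fun z hz => sc_eq_zero h ht hz, ?_⟩
  refine Subset.trans (closure_minimal ?_ isClosed_closedBall) hx
  intro z hz
  by_contra hz'
  exact hz (sc_eq_zero h ht hz')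

theorem integral_sc {F : Type*} [NormedAddCommGroup F] [NormedSpace ℝ F] (ρ : 𝔼 → ℝ)
    {t : ℝ} (ht : 0 < t) (x : 𝔼) (f : 𝔼 → F) :
    ∫ z, sc ρ t x z • f z = ∫ z, ρ z • f (x + t • z) := by
  have h1 := Measure.integral_comp_smul (volume : Measure 𝔼)
    (fun w => ρ (t⁻¹ • w) • f (x + w)) t
  simp only [smul_smul, inv_mul_cancel₀ ht.ne', one_smul, finrank_euclideanSpace_fin] at h1
  rw [h1, ← integral_sub_right_eq_self (μ := (volume : Measure 𝔼))
    (fun w => ρ (t⁻¹ • w) • f (x + w)) x, ← integral_smul]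
  congr 1
  ext z
  rw [abs_of_pos (by positivity), smul_smul]
  simp [sc]

theorem integral_abs_sc (ρ : 𝔼 → ℝ) {t : ℝ} (ht : 0 < t) (x : 𝔼) :
    ∫ z, |sc ρ t x z| = ∫ z, |ρ z| := by
  have := integral_sc (fun z => |ρ z|) ht x (fun _ => (1 : ℝ))
  simp only [smul_eq_mul, mul_one] at this
  rw [← this]
  congr 1
  ext z
  rw [sc, abs_mul, abs_of_pos (by positivity)]
  rfl

theorem sc_gradient {ρ ψ : 𝔼 → ℝ} (hk : Ker ρ ψ) {t : ℝ} (ht : 0 < t) (x z : 𝔼) :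
    t • gradient (sc ψ t x) z = -(sc ρ t x z • (t⁻¹ • (z - x))) := by
  have h1 : HasFDerivAt (fun z : 𝔼 => t⁻¹ • (z - x)) (t⁻¹ • ContinuousLinearMap.id ℝ 𝔼) z :=
    ((hasFDerivAt_id z).sub_const x).const_smul t⁻¹
  have h2 := ((hk.grad (t⁻¹ • (z - x))).comp z h1).const_mul ((t ^ n)⁻¹)
  have h3 : fderiv ℝ (sc ψ t x) z = _ := h2.fderiv
  refine ext_inner_right ℝ fun v => ?_
  rw [inner_smul_left, inner_gradient, h3]
  simp [sc, inner_smul_left]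
  field_simp
  rw [inner_sub_left]

theorem hasDerivAt_avg {ρ ψ : 𝔼 → ℝ} (hk : Ker ρ ψ) {Ω : Set 𝔼} {v : 𝔼 → ℝ}
    (hv : IsTestFun Ω v) (x : 𝔼) (t : ℝ) :
    HasDerivAt (fun t : ℝ => ∫ z, ρ z * v (x + t • z))
      (∫ z, ρ z * ⟪gradient v (x + t • z), z⟫) t := by
  have hρc := hk.smooth.continuous
  have hρs := compactSupport_of_ball hk.supp
  obtain ⟨B, hB⟩ := (testFun_grad_supp hv.2.1).exists_bound_of_continuous (testFun_grad_cont hv.1)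
  refine (hasDerivAt_integral_of_dominated_loc_of_deriv_le (s := univ)
    (bound := fun z => |ρ z| * (B * ‖z‖))
    (F' := fun t z => ρ z * ⟪gradient v (x + t • z), z⟫) univ_mem ?_ ?_ ?_ ?_ ?_ ?_).2
  · refine Eventually.of_forall fun t => Continuous.aestronglyMeasurable ?_
    exact hρc.mul (hv.1.continuous.comp (by fun_prop))
  · apply Continuous.integrable_of_hasCompactSupport
    · exact hρc.mul (hv.1.continuous.comp (by fun_prop))
    · exact hρs.mul_right
  · refine Continuous.aestronglyMeasurable ?_
    exact hρc.mul (((testFun_grad_cont hv.1).comp (by fun_prop)).inner continuous_id)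
  · refine Eventually.of_forall fun z t _ => ?_
    rw [norm_mul, Real.norm_eq_abs]
    gcongr
    refine (norm_inner_le_norm _ _).trans ?_
    gcongr
    exact hB _
  · apply Continuous.integrable_of_hasCompactSupport
    · exact hρc.abs.mul (by fun_prop)
    · exact (hρs.norm).mul_right
  · refine Eventually.of_forall fun z t _ => ?_
    have h1 : HasDerivAt (fun t : ℝ => x + t • z) z t := by
      simpa using ((hasDerivAt_id t).smul_const z).const_add x
    have h2 := (testFun_differentiable hv (x + t • z)).hasFDerivAt.comp_hasDerivAt t h1
    rw [inner_gradient]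
    exact h2.const_mul (ρ z)

theorem avg_deriv_eq {ρ ψ : 𝔼 → ℝ} (hk : Ker ρ ψ) (v : 𝔼 → ℝ) (x : 𝔼) {t : ℝ} (ht : 0 < t) :
    ∫ z, ρ z * ⟪gradient v (x + t • z), z⟫ =
      -(t * ∫ z, ⟪gradient v z, gradient (sc ψ t x) z⟫) := by
  have := integral_sc ρ ht x (fun z => ⟪gradient v z, t⁻¹ • (z - x)⟫)
  simp only [add_sub_cancel_left, smul_smul, inv_mul_cancel₀ ht.ne', one_smul, smul_eq_mul] at this
  rw [← this, ← integral_const_mul, ← integral_neg]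
  congr 1
  ext z
  rw [← real_inner_smul_right _ _ t, sc_gradient hk ht, inner_neg_right, neg_neg]
  simp only [real_inner_smul_right]

theorem mean_value_avg {ρ ψ : 𝔼 → ℝ} (hk : Ker ρ ψ) {Ω : Set 𝔼} {v : 𝔼 → ℝ}
    (hv : IsTestFun Ω v) (x : 𝔼) {s r M : ℝ} (hs : 0 < s) (hsr : s ≤ r)
    (hM : ∀ t ∈ Icc s r, t * |∫ z, ⟪gradient v z, gradient (sc ψ t x) z⟫| ≤ M) :
    |(∫ z, v z * sc ρ r x z) - ∫ z, v z * sc ρ s x z| ≤ M * (r - s) := by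
  have h := Convex.norm_image_sub_le_of_norm_hasDerivWithin_le (s := Icc s r) (x := s) (y := r)
    (C := M) (fun t _ => (hasDerivAt_avg hk hv x t).hasDerivWithinAt)
    (fun t ht => by
      have ht0 : 0 < t := hs.trans_le ht.1
      rw [avg_deriv_eq hk v x ht0, norm_neg, norm_mul, Real.norm_of_nonneg ht0.le]
      exact hM t ht) (convex_Icc s r) (left_mem_Icc.2 hsr) (right_mem_Icc.2 hsr)
  have e : ∀ t, 0 < t → ∫ z, v z * sc ρ t x z = ∫ z, ρ z * v (x + t • z) := fun t ht => by
    rw [← integral_congr_ae (Eventually.of_forall fun z => mul_comm (sc ρ t x z) (v z))]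
    exact integral_sc ρ ht x v
  rw [e r (hs.trans_le hsr), e s hs]
  rwa [Real.norm_eq_abs, Real.norm_of_nonneg (sub_nonneg.2 hsr)] at h

open Classical in
/-- The class in `L²(Ω)` of a square integrable function (zero otherwise). -/
def L2of (Ω : Set 𝔼) (f : 𝔼 → ℝ) : Lp ℝ 2 (volume.restrict Ω) :=
  if h : MemLp f 2 (volume.restrict Ω) then h.toLp f else 0

theorem L2of_eq {Ω : Set 𝔼} {f : 𝔼 → ℝ} (h : MemLp f 2 (volume.restrict Ω)) :
    L2of Ω f = h.toLp f := by
  rw [L2of, dif_pos h]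

theorem L2of_coe {Ω : Set 𝔼} {f : 𝔼 → ℝ} (h : MemLp f 2 (volume.restrict Ω)) :
    L2of Ω f =ᵐ[volume.restrict Ω] f := by
  rw [L2of_eq h]; exact h.coeFn_toLp

theorem L2of_TF {Ω : Set 𝔼} {f : 𝔼 → ℝ} (h : IsTestFun Ω f) : L2of Ω f = tL Ω ⟨f, h⟩ := by
  rw [L2of_eq (testFun_memLp h 2 Ω), tL_apply]

theorem inner_L2of {Ω : Set 𝔼} {f : 𝔼 → ℝ} (u : Lp ℝ 2 (volume.restrict Ω))
    (h : MemLp f 2 (volume.restrict Ω)) : ⟪u, L2of Ω f⟫ = ∫ x in Ω, u x * f x := by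
  rw [L2.inner_def]
  apply integral_congr_ae
  filter_upwards [L2of_coe h] with x hx
  rw [hx]; simp [mul_comm]

theorem inner_tL {Ω : Set 𝔼} (v φ : TF Ω) : ⟪tL Ω v, tL Ω φ⟫ = ∫ x, v.1 x * φ.1 x := by
  rw [tL_apply, tL_apply, inner_toLp, setIntegral_eq_of_tsupport (φ := v.1) v.2.2.2]
  · simp [mul_comm]
  · intro x hx
    simp [image_eq_zero_of_notMem_tsupport hx]

theorem inner_gL {Ω : Set 𝔼} (v φ : TF Ω) :
    ⟪gL Ω v, gL Ω φ⟫ = ∫ x, ⟪gradient v.1 x, gradient φ.1 x⟫ := by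
  rw [gL_apply, gL_apply, inner_toLp, setIntegral_eq_of_tsupport (φ := v.1) v.2.2.2]
  intro x hx
  simp [gradient_eq_zero_of_notMem hx]

theorem ker_bound {ρ : 𝔼 → ℝ} (h : Continuous ρ) (hs : ∀ z, 1 < ‖z‖ → ρ z = 0) :
    ∃ C, ∀ z, |ρ z| ≤ C :=
  (compactSupport_of_ball hs).exists_bound_of_continuous h

theorem sol_compare {ρ ψ : 𝔼 → ℝ} (hk : Ker ρ ψ) {Ω : Set 𝔼}
    [IsFiniteMeasure (volume.restrict Ω)]
    {σ u : Lp ℝ 2 (volume.restrict Ω)} {w : Lp 𝔼 2 (volume.restrict Ω)} (h : IsSol Ω σ u w)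
    {x : 𝔼} {s r M : ℝ} (hs : 0 < s) (hsr : s ≤ r) (hx : closedBall x r ⊆ Ω)
    (hM : ∀ t ∈ Icc s r, t * |⟪σ, L2of Ω (sc ψ t x)⟫| ≤ M) :
    |⟪u, L2of Ω (sc ρ r x)⟫ - ⟪u, L2of Ω (sc ρ s x)⟫| ≤ M * (r - s) := by
  have hψ : ∀ t ∈ Icc s r, IsTestFun Ω (sc ψ t x) := fun t ht =>
    sc_testFun hk.smooth' hk.supp' (hs.trans_le ht.1) ((closedBall_subset_closedBall ht.2).trans hx)
  have hρr : IsTestFun Ω (sc ρ r x) := sc_testFun hk.smooth hk.supp (hs.trans_le hsr) hx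
  have hρs : IsTestFun Ω (sc ρ s x) :=
    sc_testFun hk.smooth hk.supp hs ((closedBall_subset_closedBall hsr).trans hx)
  obtain ⟨C, hC⟩ := ker_bound hk.smooth.continuous hk.supp
  have hC0 : 0 ≤ C := (abs_nonneg _).trans (hC 0)
  obtain ⟨B, hB⟩ : ∃ B, ∀ t (ht : t ∈ Icc s r), t * ‖gL Ω ⟨_, hψ t ht⟩‖ ≤ B := by
    refine ⟨(measureUnivNNReal (volume.restrict Ω) : ℝ) ^ (2 : ℝ≥0∞).toReal⁻¹ * ((s ^ n)⁻¹ * C),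
      fun t ht => ?_⟩
    have ht0 : 0 < t := hs.trans_le ht.1
    have hns : t * ‖gL Ω ⟨_, hψ t ht⟩‖ = ‖t • gL Ω ⟨_, hψ t ht⟩‖ := by
      rw [norm_smul, Real.norm_of_nonneg ht0.le]
    rw [hns]
    refine Lp.norm_le_of_ae_bound (C := (s ^ n)⁻¹ * C) (by positivity) ?_
    have h1 := (testFun_grad_memLp (hψ t ht) 2 Ω).coeFn_toLp
    filter_upwards [Lp.coeFn_smul t (gL Ω ⟨_, hψ t ht⟩), h1] with z hz1 hz2
    rw [hz1, Pi.smul_apply, gL_apply, hz2, sc_gradient hk ht0, norm_neg]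
    by_cases hz : z ∈ closedBall x t
    · rw [mem_closedBall, dist_eq_norm] at hz
      have h2 : ‖t⁻¹ • (z - x)‖ ≤ 1 := by
        rw [norm_smul, norm_inv, Real.norm_of_nonneg ht0.le, ← div_eq_inv_mul]
        exact div_le_one_of_le₀ hz ht0.le
      have h3 : ‖sc ρ t x z‖ ≤ (s ^ n)⁻¹ * C := by
        rw [sc, norm_mul, Real.norm_of_nonneg (by positivity)]
        gcongr
        · exact ht.1
        · exact hC _
      rw [norm_smul]
      calc _ ≤ (s ^ n)⁻¹ * C * 1 := by gcongr
        _ = _ := mul_one _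
    · rw [sc_eq_zero hk.supp ht0 hz]; simp; positivity
  obtain ⟨φ, hφ1, hφ2⟩ := h.approx
  have key : ∀ k, |⟪tL Ω (φ k), L2of Ω (sc ρ r x)⟫ - ⟪tL Ω (φ k), L2of Ω (sc ρ s x)⟫| ≤
      (M + ‖gL Ω (φ k) - w‖ * B) * (r - s) := by
    intro k
    rw [L2of_TF hρr, L2of_TF hρs, inner_tL, inner_tL]
    refine mean_value_avg hk (φ k).2 x hs hsr fun t ht => ?_
    have ht0 : 0 < t := hs.trans_le ht.1
    have e1 := inner_gL (φ k) ⟨_, hψ t ht⟩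
    simp only at e1
    rw [← e1]
    have e2 : ⟪gL Ω (φ k), gL Ω ⟨_, hψ t ht⟩⟫ =
        ⟪σ, L2of Ω (sc ψ t x)⟫ + ⟪gL Ω (φ k) - w, gL Ω ⟨_, hψ t ht⟩⟫ := by
      rw [L2of_TF (hψ t ht), ← h.weak, inner_sub_left]; ring
    rw [e2]
    calc _ ≤ t * (|⟪σ, L2of Ω (sc ψ t x)⟫| + ‖gL Ω (φ k) - w‖ * ‖gL Ω ⟨_, hψ t ht⟩‖) := by
          gcongr
          exact (abs_add_le _ _).trans (by gcongr; exact abs_real_inner_le_norm _ _)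
      _ = t * |⟪σ, L2of Ω (sc ψ t x)⟫| + ‖gL Ω (φ k) - w‖ * (t * ‖gL Ω ⟨_, hψ t ht⟩‖) := by ring
      _ ≤ _ := by
          gcongr
          · exact hM t ht
          · exact hB t ht
  have l1 : Tendsto (fun k => |⟪tL Ω (φ k), L2of Ω (sc ρ r x)⟫ -
      ⟪tL Ω (φ k), L2of Ω (sc ρ s x)⟫|) atTop
      (𝓝 |⟪u, L2of Ω (sc ρ r x)⟫ - ⟪u, L2of Ω (sc ρ s x)⟫|) :=
    ((hφ1.inner tendsto_const_nhds).sub (hφ1.inner tendsto_const_nhds)).abs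
  have l2 : Tendsto (fun k => (M + ‖gL Ω (φ k) - w‖ * B) * (r - s)) atTop
      (𝓝 ((M + ‖w - w‖ * B) * (r - s))) :=
    (((hφ2.sub tendsto_const_nhds).norm.mul_const B).const_add M).mul_const (r - s)
  have := le_of_tendsto_of_tendsto' l1 l2 key
  simpa using this

theorem sc_memLp {ρ : 𝔼 → ℝ} (h : Continuous ρ) (hs : ∀ z, 1 < ‖z‖ → ρ z = 0) {t : ℝ}
    (ht : 0 < t) (x : 𝔼) (p : ℝ≥0∞) : MemLp (sc ρ t x) p volume := by
  have hc : Continuous (sc ρ t x) := by unfold sc; fun_prop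
  exact hc.memLp_of_hasCompactSupport (HasCompactSupport.intro (isCompact_closedBall x t)
    fun z hz => sc_eq_zero hs ht hz)

set_option maxHeartbeats 1000000 in
theorem sol_L1_bound {ρ ψ : 𝔼 → ℝ} (hk : Ker ρ ψ) {Ω : Set 𝔼}
    [IsFiniteMeasure (volume.restrict Ω)]
    {S : Lp ℝ 2 (volume.restrict Ω) →L[ℝ] Lp ℝ 2 (volume.restrict Ω)}
    (hsym : ∀ f g, ⟪S f, g⟫ = ⟪f, S g⟫) (hsol : ∀ f, ∃ w, IsSol Ω f (S f) w)
    {x : 𝔼} {s r : ℝ} (hs : 0 < s) (hsr : s ≤ r) (hx : closedBall x r ⊆ Ω) :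
    eLpNorm (fun z => S (L2of Ω (sc ρ r x)) z - S (L2of Ω (sc ρ s x)) z) 1 (volume.restrict Ω)
      ≤ ENNReal.ofReal (r * (∫ z, |ψ z|) * r) := by
  have hA : 0 ≤ ∫ z, |ψ z| := integral_nonneg fun z => abs_nonneg _
  set d := S (L2of Ω (sc ρ r x)) - S (L2of Ω (sc ρ s x)) with hd
  have hdc : (fun z => S (L2of Ω (sc ρ r x)) z - S (L2of Ω (sc ρ s x)) z)
      =ᵐ[volume.restrict Ω] d := (Lp.coeFn_sub _ _).symm
  rw [eLpNorm_congr_ae hdc]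
  have hdm : StronglyMeasurable d := Lp.stronglyMeasurable d
  set σ : 𝔼 → ℝ := fun z => if 0 ≤ d z then 1 else -1 with hσ
  have hσm : Measurable σ :=
    Measurable.ite (measurableSet_le measurable_const hdm.measurable) measurable_const
      measurable_const
  have hσ1 : ∀ z, |σ z| ≤ 1 := by
    intro z; simp only [hσ]; split_ifs <;> simp
  have hσL : MemLp σ 2 (volume.restrict Ω) :=
    MemLp.of_bound hσm.aestronglyMeasurable 1 (Eventually.of_forall hσ1)
  obtain ⟨w, hw⟩ := hsol (L2of Ω σ)
  have hcmp := sol_compare hk hw hs hsr hx (M := r * ∫ z, |ψ z|) (fun t ht => by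
    have ht0 : 0 < t := hs.trans_le ht.1
    have hm := sc_memLp hk.smooth'.continuous hk.supp' ht0 x 2
    have hm1 := (memLp_one_iff_integrable.1
      (sc_memLp hk.smooth'.continuous hk.supp' ht0 x 1)).abs
    gcongr
    · exact ht0.le.trans ht.2
    · exact ht.2
    · rw [inner_L2of _ (hm.restrict Ω), ← integral_abs_sc ψ ht0 x]
      refine (abs_integral_le_integral_abs).trans ?_
      refine le_trans ?_ (setIntegral_le_integral (s := Ω) hm1 (Eventually.of_forall fun z => abs_nonneg _))
      refine integral_mono_of_nonneg (Eventually.of_forall fun z => abs_nonneg _) hm1.restrict ?_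
      filter_upwards [L2of_coe hσL] with z hz
      rw [hz, abs_mul]
      exact mul_le_of_le_one_left (abs_nonneg _) (hσ1 z))
  have e1 : ⟪S (L2of Ω σ), L2of Ω (sc ρ r x)⟫ - ⟪S (L2of Ω σ), L2of Ω (sc ρ s x)⟫ =
      ∫ z in Ω, ‖d z‖ := by
    rw [hsym, hsym, ← inner_sub_right, ← hd, real_inner_comm, inner_L2of _ hσL]
    congr 1
    ext z
    simp only [hσ, Real.norm_eq_abs]
    split_ifs with h0
    · rw [abs_of_nonneg h0, mul_one]
    · rw [abs_of_neg (not_le.1 h0)]; ring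
  rw [e1] at hcmp
  have hdi : Integrable d (volume.restrict Ω) := (Lp.memLp d).integrable (by norm_num)
  rw [eLpNorm_one_eq_lintegral_enorm, ← ofReal_integral_norm_eq_lintegral_enorm hdi]
  apply ENNReal.ofReal_le_ofReal
  refine (le_abs_self _).trans (hcmp.trans ?_)
  have : 0 ≤ r := hs.le.trans hsr
  gcongr
  linarith

theorem ae_avg_tendsto {ρ ψ : 𝔼 → ℝ} (hk : Ker ρ ψ) {Ω : Set 𝔼} (hΩ : IsOpen Ω)
    [IsFiniteMeasure (volume.restrict Ω)] (u : Lp ℝ 2 (volume.restrict Ω)) :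
    ∀ᵐ x ∂(volume.restrict Ω),
      Tendsto (fun t => ⟪u, L2of Ω (sc ρ t x)⟫) (𝓝[>] 0) (𝓝 (u x)) := by
  have hui : IntegrableOn u Ω := (Lp.memLp u).integrable (by norm_num)
  have hU : Integrable (Ω.indicator u) volume := hui.integrable_indicator hΩ.measurableSet
  obtain ⟨C, hC⟩ := ker_bound hk.smooth.continuous hk.supp
  rw [ae_restrict_iff' hΩ.measurableSet]
  filter_upwards [(Besicovitch.vitaliFamily (volume : Measure 𝔼)).ae_tendsto_average_norm_sub
    hU.locallyIntegrable] with x h₀ hx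
  have h1 := h₀.comp (Besicovitch.tendsto_filterAt volume x)
  have h2 : Tendsto (fun t => ∫ z, sc ρ t x z • Ω.indicator u z) (𝓝[>] 0)
      (𝓝 (Ω.indicator u x)) := by
    refine tendsto_integral_smul_of_tendsto_average_norm_sub
      (C * (volume : Measure 𝔼).real (ball 0 1)) h1 ?_ ?_ ?_ ?_
    · exact Eventually.of_forall fun t => hU.integrableOn
    · refine tendsto_const_nhds.congr' ?_
      filter_upwards [self_mem_nhdsWithin] with t ht
      have := integral_sc ρ ht x (fun _ => (1 : ℝ))
      simp only [smul_eq_mul, mul_one] at this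
      rw [this, hk.mass]
    · filter_upwards [self_mem_nhdsWithin] with t ht z hz
      by_contra hz'
      exact hz (sc_eq_zero hk.supp ht hz')
    · filter_upwards [self_mem_nhdsWithin] with t ht z
      have ht : 0 < t := ht
      have hb : 0 < (volume : Measure 𝔼).real (ball 0 1) :=
        ENNReal.toReal_pos (measure_ball_pos _ _ one_pos).ne' measure_ball_lt_top.ne
      rw [Measure.addHaar_real_closedBall _ _ ht.le, finrank_euclideanSpace_fin,
        mul_div_mul_right _ _ hb.ne', sc, abs_mul, abs_of_pos (by positivity), div_eq_inv_mul]
      gcongr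
      exact hC _
  rw [indicator_of_mem hx] at h2
  refine h2.congr' ?_
  filter_upwards [self_mem_nhdsWithin] with t ht
  rw [inner_L2of _ ((sc_memLp hk.smooth.continuous hk.supp ht x 2).restrict Ω),
    ← integral_indicator hΩ.measurableSet]
  congr 1
  ext z
  by_cases hz : z ∈ Ω <;> simp [hz, mul_comm]

open BoundedContinuousFunction in
/-- Evaluation of an operator valued bounded continuous function at a direction. -/
def evalL (E F : Type) [NormedAddCommGroup E] [NormedSpace ℝ E] [NormedAddCommGroup F]
    [NormedSpace ℝ F] : (E →ᵇ (E →L[ℝ] F)) →L[ℝ] (E →L[ℝ] (E →ᵇ F)) :=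
  (LinearMap.mkContinuous₂ (LinearMap.mk₂ ℝ
    (fun (h : E) (g : E →ᵇ (E →L[ℝ] F)) =>
      (ContinuousLinearMap.apply ℝ F h).compLeftContinuousBounded E g)
    (fun a b g => by ext; simp) (fun c a g => by ext; simp)
    (fun a g g' => by ext; simp) (fun c a g => by ext; simp)) 1 (fun h g => by
      refine (BoundedContinuousFunction.norm_le (by positivity)).2 fun z => ?_
      simp only [LinearMap.mk₂_apply, ContinuousLinearMap.compLeftContinuousBounded_apply,
        ContinuousLinearMap.apply_apply, one_mul]
      exact (ContinuousLinearMap.le_opNorm _ _).trans (by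
        rw [mul_comm]; gcongr; exact g.norm_coe_le_norm z))).flip

theorem evalL_apply {E F : Type} [NormedAddCommGroup E] [NormedSpace ℝ E] [NormedAddCommGroup F]
    [NormedSpace ℝ F] (g : BoundedContinuousFunction E (E →L[ℝ] F)) (h z : E) :
    evalL E F g h z = g z h := rfl

theorem evalL_contDiff {E F : Type} [NormedAddCommGroup E] [NormedSpace ℝ E]
    [NormedAddCommGroup F] [NormedSpace ℝ F] (m : ℕ) : ContDiff ℝ m (fun g => evalL E F g) := by
  fun_prop

/-- Translates of a continuous compactly supported function. -/
def transl {E F : Type} [NormedAddCommGroup E] [NormedAddCommGroup F]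
    (g : E → F) (hg : Continuous g) (hc : HasCompactSupport g) (x : E) :
    BoundedContinuousFunction E F :=
  BoundedContinuousFunction.ofNormedAddCommGroup (fun z => g (z - x)) (by fun_prop)
    (hc.exists_bound_of_continuous hg).choose
    (fun z => (hc.exists_bound_of_continuous hg).choose_spec (z - x))

theorem transl_apply {E F : Type} [NormedAddCommGroup E] [NormedAddCommGroup F]
    (g : E → F) (hg : Continuous g) (hc : HasCompactSupport g) (x z : E) :
    transl g hg hc x z = g (z - x) := rfl

theorem transl_continuous {E F : Type} [NormedAddCommGroup E] [NormedAddCommGroup F]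
    (g : E → F) (hg : Continuous g) (hc : HasCompactSupport g) : Continuous (transl g hg hc) := by
  have hu := hc.uniformContinuous_of_continuous hg
  rw [Metric.uniformContinuous_iff] at hu
  rw [Metric.continuous_iff]
  intro x ε hε
  obtain ⟨δ, hδ, h⟩ := hu (ε / 2) (half_pos hε)
  refine ⟨δ, hδ, fun y hy => lt_of_le_of_lt
    ((BoundedContinuousFunction.dist_le (half_pos hε).le).2 fun z => ?_) (half_lt_self hε)⟩
  rw [transl_apply, transl_apply]
  refine (h ?_).le
  rw [dist_eq_norm] at hy ⊢
  rw [show z - y - (z - x) = -(y - x) by abel, norm_neg]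
  exact hy

theorem transl_hasFDerivAt {E F : Type} [NormedAddCommGroup E] [NormedSpace ℝ E]
    [NormedAddCommGroup F] [NormedSpace ℝ F]
    (g : E → F) (hg : Continuous g) (hc : HasCompactSupport g) (hd : ContDiff ℝ 1 g)
    (hg' : Continuous (fun z => -fderiv ℝ g z))
    (hc' : HasCompactSupport (fun z => -fderiv ℝ g z)) (x : E) :
    HasFDerivAt (transl g hg hc) (evalL E F (transl _ hg' hc' x)) x := by
  have hu := hc'.uniformContinuous_of_continuous hg'
  rw [Metric.uniformContinuous_iff] at hu
  rw [hasFDerivAt_iff_isLittleO, Asymptotics.isLittleO_iff]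
  intro ε hε
  obtain ⟨δ, hδ, h⟩ := hu ε hε
  filter_upwards [Metric.ball_mem_nhds x hδ] with y hy
  refine (BoundedContinuousFunction.norm_le (by positivity)).2 fun z => ?_
  simp only [BoundedContinuousFunction.coe_sub, Pi.sub_apply, transl_apply, evalL_apply]
  have hmv := Convex.norm_image_sub_le_of_norm_hasFDerivWithin_le'
    (f := fun y => g (z - y)) (f' := fun y => -fderiv ℝ g (z - y)) (φ := -fderiv ℝ g (z - x))
    (s := ball x δ) (C := ε) (x := x) (y := y) (fun y' hy' => ?_) (fun y' hy' => ?_)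
    (convex_ball x δ) (mem_ball_self hδ) hy
  · simpa using hmv
  · have h1 := (hd.differentiable (by norm_num) (z - y')).hasFDerivAt
    have h2 := h1.comp y' ((hasFDerivAt_id y').const_sub z)
    refine HasFDerivAt.hasFDerivWithinAt ?_
    have e : -fderiv ℝ g (z - y') = (fderiv ℝ g (z - y')).comp (-ContinuousLinearMap.id ℝ E) := by
      ext v; simp
    change HasFDerivAt _ (-fderiv ℝ g (z - y')) y'
    rw [e]
    exact h2
  · have := @h (z - y') (z - x) (by
      rw [mem_ball, dist_eq_norm] at hy'
      rw [dist_eq_norm, show z - y' - (z - x) = -(y' - x) by abel, norm_neg]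
      exact hy')
    rw [dist_eq_norm] at this
    exact this.le

theorem transl_contDiff_nat {E : Type} [NormedAddCommGroup E] [NormedSpace ℝ E] (m : ℕ) :
    ∀ {F : Type} [NormedAddCommGroup F] [NormedSpace ℝ F]
    (g : E → F) (hg : Continuous g) (hc : HasCompactSupport g) (_ : ContDiff ℝ (⊤ : ℕ∞) g),
    ContDiff ℝ m (transl g hg hc) := by
  induction m with
  | zero =>
    intro F _ _ g hg hc hd
    exact contDiff_zero.2 (transl_continuous g hg hc)
  | succ m ih =>
    intro F _ _ g hg hc hd
    have hd' : ContDiff ℝ (⊤ : ℕ∞) (fun z => -fderiv ℝ g z) :=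
      (hd.fderiv_right (m := (⊤ : ℕ∞)) (by simp)).neg
    have hc' : HasCompactSupport (fun z => -fderiv ℝ g z) := (hc.fderiv ℝ).neg
    have := contDiff_succ_iff_hasFDerivAt (𝕜 := ℝ) (n := m) (f := transl g hg hc)
    push_cast
    rw [this]
    exact ⟨fun x => evalL E F (transl _ hd'.continuous hc' x),
      ContDiff.comp (evalL_contDiff m) (ih _ hd'.continuous hc' hd'), fun x =>
      transl_hasFDerivAt g hg hc (hd.of_le (by simp)) hd'.continuous hc' x⟩

theorem transl_contDiff {E F : Type} [NormedAddCommGroup E] [NormedSpace ℝ E]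
    [NormedAddCommGroup F] [NormedSpace ℝ F]
    (g : E → F) (hg : Continuous g) (hc : HasCompactSupport g) (hd : ContDiff ℝ (⊤ : ℕ∞) g) :
    ContDiff ℝ (⊤ : ℕ∞) (transl g hg hc) :=
  contDiff_infty.2 fun m => transl_contDiff_nat m g hg hc hd

theorem L2of_sc_contDiff {ρ ψ : 𝔼 → ℝ} (hk : Ker ρ ψ) (Ω : Set 𝔼)
    [IsFiniteMeasure (volume.restrict Ω)] {t : ℝ} (ht : 0 < t) :
    ContDiff ℝ (⊤ : ℕ∞) (fun x => L2of Ω (sc ρ t x)) := by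
  have hsm : ContDiff ℝ (⊤ : ℕ∞) (sc ρ t (0 : 𝔼)) := sc_contDiff hk.smooth t 0
  have hc : HasCompactSupport (sc ρ t (0 : 𝔼)) :=
    HasCompactSupport.intro (isCompact_closedBall 0 t) fun z hz => sc_eq_zero hk.supp ht hz
  have h1 := transl_contDiff _ hsm.continuous hc hsm
  have h2 := (BoundedContinuousFunction.toLp (E := ℝ) (α := 𝔼) 2 (volume.restrict Ω)
    ℝ).contDiff.comp h1
  convert h2 using 1
  ext1 x
  refine Lp.ext ?_
  have hm := (sc_memLp hk.smooth.continuous hk.supp ht x 2).restrict Ω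
  refine (L2of_coe hm).trans ?_
  simp only [Function.comp]
  filter_upwards [BoundedContinuousFunction.coeFn_toLp (p := 2) (volume.restrict Ω) ℝ
    (transl _ hsm.continuous hc x)] with z hz
  rw [hz, transl_apply]
  simp [sc]

/-- Admissible radii for the pair `x, y`. -/
def Good (Ω : Set 𝔼) (x y : 𝔼) (s t : ℝ) : Prop :=
  0 < s ∧ 0 < t ∧ closedBall x s ⊆ Ω ∧ closedBall y t ⊆ Ω ∧ s + t < dist x y

theorem Good.symm {Ω : Set 𝔼} {x y : 𝔼} {s t : ℝ} (h : Good Ω x y s t) : Good Ω y x t s :=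
  ⟨h.2.1, h.1, h.2.2.2.1, h.2.2.1, by rw [add_comm, dist_comm]; exact h.2.2.2.2⟩

theorem Good.mono {Ω : Set 𝔼} {x y : 𝔼} {s t s' t' : ℝ} (h : Good Ω x y s t) (hs : 0 < s')
    (ht : 0 < t') (hss : s' ≤ s) (htt : t' ≤ t) : Good Ω x y s' t' :=
  ⟨hs, ht, (closedBall_subset_closedBall hss).trans h.2.2.1,
    (closedBall_subset_closedBall htt).trans h.2.2.2.1, by linarith [h.2.2.2.2]⟩

theorem indep_step {ρ ψ : 𝔼 → ℝ} (hk : Ker ρ ψ) {Ω : Set 𝔼}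
    [IsFiniteMeasure (volume.restrict Ω)]
    {S : Lp ℝ 2 (volume.restrict Ω) →L[ℝ] Lp ℝ 2 (volume.restrict Ω)}
    (hsol : ∀ f, ∃ w, IsSol Ω f (S f) w) {x y : 𝔼} {s r t : ℝ} (h : Good Ω x y r t) (hs : 0 < s)
    (hsr : s ≤ r) :
    ⟪S (L2of Ω (sc ρ t y)), L2of Ω (sc ρ r x)⟫ = ⟪S (L2of Ω (sc ρ t y)), L2of Ω (sc ρ s x)⟫ := by
  obtain ⟨w, hw⟩ := hsol (L2of Ω (sc ρ t y))
  have hm := (sc_memLp hk.smooth.continuous hk.supp h.2.1 y 2).restrict Ω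
  have := sol_compare hk hw hs hsr h.2.2.1 (M := 0) (fun τ hτ => by
    have hτ0 : 0 < τ := hs.trans_le hτ.1
    have hm' := (sc_memLp hk.smooth'.continuous hk.supp' hτ0 x 2).restrict Ω
    rw [inner_L2of _ hm', integral_eq_zero_of_ae, abs_zero, mul_zero]
    filter_upwards [L2of_coe hm] with z hz
    rw [hz]
    by_cases h1 : z ∈ closedBall y t
    · have h2 : z ∉ closedBall x τ := by
        intro h2
        rw [mem_closedBall] at h1 h2
        have := dist_triangle_left x y z
        have := h.2.2.2.2
        have := hτ.2
        linarith
      simp [sc_eq_zero hk.supp' hτ0 h2]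
    · simp [sc_eq_zero hk.supp h.2.1 h1])
  rw [zero_mul] at this
  exact sub_eq_zero.1 (abs_eq_zero.1 (le_antisymm this (abs_nonneg _)))

theorem indep_le {ρ ψ : 𝔼 → ℝ} (hk : Ker ρ ψ) {Ω : Set 𝔼}
    [IsFiniteMeasure (volume.restrict Ω)]
    {S : Lp ℝ 2 (volume.restrict Ω) →L[ℝ] Lp ℝ 2 (volume.restrict Ω)}
    (hsym : ∀ f g, ⟪S f, g⟫ = ⟪f, S g⟫)
    (hsol : ∀ f, ∃ w, IsSol Ω f (S f) w) {x y : 𝔼} {s t s' t' : ℝ} (h : Good Ω x y s t)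
    (hs : 0 < s') (ht : 0 < t') (hss : s' ≤ s) (htt : t' ≤ t) :
    ⟪S (L2of Ω (sc ρ s x)), L2of Ω (sc ρ t y)⟫ = ⟪S (L2of Ω (sc ρ s' x)), L2of Ω (sc ρ t' y)⟫ := by
  rw [indep_step hk hsol h.symm ht htt, hsym, real_inner_comm,
    indep_step hk hsol (h.mono h.1 ht le_rfl htt) hs hss, real_inner_comm, ← hsym]

theorem indep {ρ ψ : 𝔼 → ℝ} (hk : Ker ρ ψ) {Ω : Set 𝔼}
    [IsFiniteMeasure (volume.restrict Ω)]
    {S : Lp ℝ 2 (volume.restrict Ω) →L[ℝ] Lp ℝ 2 (volume.restrict Ω)}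
    (hsym : ∀ f g, ⟪S f, g⟫ = ⟪f, S g⟫)
    (hsol : ∀ f, ∃ w, IsSol Ω f (S f) w) {x y : 𝔼} {s t s' t' : ℝ} (h : Good Ω x y s t)
    (h' : Good Ω x y s' t') :
    ⟪S (L2of Ω (sc ρ s x)), L2of Ω (sc ρ t y)⟫ = ⟪S (L2of Ω (sc ρ s' x)), L2of Ω (sc ρ t' y)⟫ := by
  rw [indep_le hk hsym hsol h (lt_min h.1 h'.1) (lt_min h.2.1 h'.2.1) (min_le_left _ _)
    (min_le_left _ _), indep_le hk hsym hsol h' (lt_min h.1 h'.1) (lt_min h.2.1 h'.2.1)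
    (min_le_right _ _) (min_le_right _ _)]

open Classical in
/-- The Green function built from the solution operator `S` and the mollifier `ρ`. -/
def green (Ω : Set 𝔼) (ρ : 𝔼 → ℝ)
    (S : Lp ℝ 2 (volume.restrict Ω) →L[ℝ] Lp ℝ 2 (volume.restrict Ω)) (x y : 𝔼) : ℝ :=
  if h : ∃ p : ℝ × ℝ, Good Ω x y p.1 p.2 then
    ⟪S (L2of Ω (sc ρ h.choose.1 x)), L2of Ω (sc ρ h.choose.2 y)⟫ else 0

theorem green_eq {ρ ψ : 𝔼 → ℝ} (hk : Ker ρ ψ) {Ω : Set 𝔼}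
    [IsFiniteMeasure (volume.restrict Ω)]
    {S : Lp ℝ 2 (volume.restrict Ω) →L[ℝ] Lp ℝ 2 (volume.restrict Ω)}
    (hsym : ∀ f g, ⟪S f, g⟫ = ⟪f, S g⟫)
    (hsol : ∀ f, ∃ w, IsSol Ω f (S f) w) {x y : 𝔼} {s t : ℝ} (h : Good Ω x y s t) :
    green Ω ρ S x y = ⟪S (L2of Ω (sc ρ s x)), L2of Ω (sc ρ t y)⟫ := by
  have hex : ∃ p : ℝ × ℝ, Good Ω x y p.1 p.2 := ⟨(s, t), h⟩
  rw [green, dif_pos hex]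
  exact indep hk hsym hsol hex.choose_spec h

theorem exists_closedBall {Ω : Set 𝔼} (hΩ : IsOpen Ω) {x : 𝔼} (hx : x ∈ Ω) :
    ∃ r, 0 < r ∧ closedBall x r ⊆ Ω := by
  obtain ⟨r, hr, h⟩ := Metric.nhds_basis_closedBall.mem_iff.1 (hΩ.mem_nhds hx)
  exact ⟨r, hr, h⟩

theorem exists_good_nhds {Ω : Set 𝔼} (hΩ : IsOpen Ω) {x y : 𝔼} (hx : x ∈ Ω) (hy : y ∈ Ω)
    (hxy : x ≠ y) : ∃ r > 0, ∀ x' ∈ ball x r, ∀ y' ∈ ball y r, Good Ω x' y' r r := by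
  obtain ⟨a, ha, hax⟩ := exists_closedBall hΩ hx
  obtain ⟨b, hb, hby⟩ := exists_closedBall hΩ hy
  have hd : 0 < dist x y := dist_pos.2 hxy
  set r := min (min a b) (dist x y) / 5 with hr
  have hra : r + r ≤ a := by
    have : min (min a b) (dist x y) ≤ a := (min_le_left _ _).trans (min_le_left _ _)
    linarith
  have hrb : r + r ≤ b := by
    have : min (min a b) (dist x y) ≤ b := (min_le_left _ _).trans (min_le_right _ _)
    linarith
  have hrd : 5 * r ≤ dist x y := by
    have : min (min a b) (dist x y) ≤ dist x y := min_le_right _ _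
    linarith
  have hr0 : 0 < r := by positivity
  refine ⟨r, hr0, fun x' hx' y' hy' => ⟨hr0, hr0, ?_, ?_, ?_⟩⟩
  · refine (closedBall_subset_closedBall' ?_).trans hax
    have := mem_ball.1 hx'; linarith
  · refine (closedBall_subset_closedBall' ?_).trans hby
    have := mem_ball.1 hy'; linarith
  · have h1 := mem_ball'.1 hx'
    have h2 := mem_ball.1 hy'
    have h3 := dist_triangle4 x x' y' y
    linarith

theorem green_symm {ρ ψ : 𝔼 → ℝ} (hk : Ker ρ ψ) {Ω : Set 𝔼} (hΩ : IsOpen Ω)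
    [IsFiniteMeasure (volume.restrict Ω)]
    {S : Lp ℝ 2 (volume.restrict Ω) →L[ℝ] Lp ℝ 2 (volume.restrict Ω)}
    (hsym : ∀ f g, ⟪S f, g⟫ = ⟪f, S g⟫)
    (hsol : ∀ f, ∃ w, IsSol Ω f (S f) w) {x y : 𝔼} (hx : x ∈ Ω) (hy : y ∈ Ω) (hxy : x ≠ y) :
    green Ω ρ S x y = green Ω ρ S y x := by
  obtain ⟨r, hr, h⟩ := exists_good_nhds hΩ hx hy hxy
  have hg := h x (mem_ball_self hr) y (mem_ball_self hr)
  rw [green_eq hk hsym hsol hg, green_eq hk hsym hsol hg.symm, hsym, real_inner_comm]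

theorem green_contDiffAt {ρ ψ : 𝔼 → ℝ} (hk : Ker ρ ψ) {Ω : Set 𝔼} (hΩ : IsOpen Ω)
    [IsFiniteMeasure (volume.restrict Ω)]
    {S : Lp ℝ 2 (volume.restrict Ω) →L[ℝ] Lp ℝ 2 (volume.restrict Ω)}
    (hsym : ∀ f g, ⟪S f, g⟫ = ⟪f, S g⟫)
    (hsol : ∀ f, ∃ w, IsSol Ω f (S f) w) {x y : 𝔼} (hx : x ∈ Ω) (hy : y ∈ Ω) (hxy : x ≠ y) :
    ContDiffAt ℝ (⊤ : ℕ∞) (fun p : 𝔼 × 𝔼 => green Ω ρ S p.1 p.2) (x, y) := by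
  obtain ⟨r, hr, h⟩ := exists_good_nhds hΩ hx hy hxy
  have h0 := L2of_sc_contDiff hk Ω hr
  have h1 : ContDiff ℝ (⊤ : ℕ∞) (fun p : 𝔼 × 𝔼 =>
      ⟪S (L2of Ω (sc ρ r p.1)), L2of Ω (sc ρ r p.2)⟫) :=
    ContDiff.inner ℝ (S.contDiff.comp (h0.comp contDiff_fst)) (h0.comp contDiff_snd)
  refine h1.contDiffAt.congr_of_eventuallyEq ?_
  filter_upwards [prod_mem_nhds (ball_mem_nhds x hr) (ball_mem_nhds y hr)] with p hp
  exact green_eq hk hsym hsol (h p.1 hp.1 p.2 hp.2)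

theorem green_ae {ρ ψ : 𝔼 → ℝ} (hk : Ker ρ ψ) {Ω : Set 𝔼} (hΩ : IsOpen Ω)
    [IsFiniteMeasure (volume.restrict Ω)]
    {S : Lp ℝ 2 (volume.restrict Ω) →L[ℝ] Lp ℝ 2 (volume.restrict Ω)}
    (hsym : ∀ f g, ⟪S f, g⟫ = ⟪f, S g⟫)
    (hsol : ∀ f, ∃ w, IsSol Ω f (S f) w) {x : 𝔼} {s : ℝ} (hs : 0 < s)
    (hx : closedBall x s ⊆ Ω) :
    ∀ᵐ y ∂(volume.restrict Ω), s < dist x y → S (L2of Ω (sc ρ s x)) y = green Ω ρ S x y := by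
  filter_upwards [ae_avg_tendsto hk hΩ (S (L2of Ω (sc ρ s x))),
    ae_restrict_mem hΩ.measurableSet] with y hy hyΩ hd
  refine tendsto_nhds_unique hy (tendsto_const_nhds.congr' ?_)
  obtain ⟨b, hb, hby⟩ := exists_closedBall hΩ hyΩ
  filter_upwards [Ioo_mem_nhdsGT (lt_min hb (sub_pos.2 hd))] with t ht
  refine green_eq hk hsym hsol ⟨hs, ht.1, hx, (closedBall_subset_closedBall
    (ht.2.le.trans (min_le_left _ _))).trans hby, ?_⟩
  have := ht.2.trans_le (min_le_right _ _)
  linarith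

theorem green_L1 (hn : 0 < n) {ρ ψ : 𝔼 → ℝ} (hk : Ker ρ ψ) {Ω : Set 𝔼} (hΩ : IsOpen Ω)
    [IsFiniteMeasure (volume.restrict Ω)]
    {S : Lp ℝ 2 (volume.restrict Ω) →L[ℝ] Lp ℝ 2 (volume.restrict Ω)}
    (hsym : ∀ f g, ⟪S f, g⟫ = ⟪f, S g⟫)
    (hsol : ∀ f, ∃ w, IsSol Ω f (S f) w) {x : 𝔼} {r : ℝ} (hr : 0 < r)
    (hx : closedBall x r ⊆ Ω) :
    AEStronglyMeasurable (green Ω ρ S x) (volume.restrict Ω) ∧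
    eLpNorm (fun z => S (L2of Ω (sc ρ r x)) z - green Ω ρ S x z) 1 (volume.restrict Ω)
      ≤ ENNReal.ofReal (r * (∫ z, |ψ z|) * r) := by
  have : Nonempty (Fin n) := ⟨⟨0, hn⟩⟩
  let s : ℕ → ℝ := fun k => r / (k + 1)
  have hs0 : ∀ k, 0 < s k := fun k => by positivity
  have hsr : ∀ k, s k ≤ r := fun k => div_le_self hr.le (by simp)
  have hst : Tendsto s atTop (𝓝 0) := by
    simpa [s, div_eq_mul_inv] using (tendsto_one_div_add_atTop_nhds_zero_nat (𝕜 := ℝ)).const_mul r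
  have hne : ∀ᵐ y ∂(volume.restrict Ω), y ≠ x :=
    ae_restrict_of_ae (by simp [ae_iff])
  have hlim : ∀ᵐ y ∂(volume.restrict Ω),
      ∀ᶠ k in atTop, S (L2of Ω (sc ρ (s k) x)) y = green Ω ρ S x y := by
    filter_upwards [ae_all_iff.2 fun k => green_ae hk hΩ hsym hsol (hs0 k)
      ((closedBall_subset_closedBall (hsr k)).trans hx), hne] with y hy hyx
    filter_upwards [hst.eventually_lt_const (dist_pos.2 hyx.symm)] with k hk'
    exact hy k hk'
  have hmeas : AEStronglyMeasurable (green Ω ρ S x) (volume.restrict Ω) := by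
    refine aestronglyMeasurable_of_tendsto_ae atTop
      (fun k => (Lp.aestronglyMeasurable (S (L2of Ω (sc ρ (s k) x))))) ?_
    filter_upwards [hlim] with y hy
    exact tendsto_const_nhds.congr' (hy.mono fun k h => h.symm)
  refine ⟨hmeas, ?_⟩
  refine le_trans (Lp.eLpNorm_lim_le_liminf_eLpNorm
    (f := fun k z => S (L2of Ω (sc ρ r x)) z - S (L2of Ω (sc ρ (s k) x)) z)
    (fun k => (Lp.aestronglyMeasurable _).sub (Lp.aestronglyMeasurable _)) _ ?_) ?_
  · filter_upwards [hlim] with y hy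
    exact tendsto_const_nhds.congr' (hy.mono fun k h => by beta_reduce; rw [h])
  · exact liminf_le_of_frequently_le' (Frequently.of_forall fun k =>
      sol_L1_bound hk hsym hsol (hs0 k) (hsr k) hx)

theorem green_integrable (hn : 0 < n) {ρ ψ : 𝔼 → ℝ} (hk : Ker ρ ψ) {Ω : Set 𝔼} (hΩ : IsOpen Ω)
    [IsFiniteMeasure (volume.restrict Ω)]
    {S : Lp ℝ 2 (volume.restrict Ω) →L[ℝ] Lp ℝ 2 (volume.restrict Ω)}
    (hsym : ∀ f g, ⟪S f, g⟫ = ⟪f, S g⟫)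
    (hsol : ∀ f, ∃ w, IsSol Ω f (S f) w) {x : 𝔼} (hx : x ∈ Ω) :
    Integrable (green Ω ρ S x) (volume.restrict Ω) := by
  obtain ⟨r, hr, hr'⟩ := exists_closedBall hΩ hx
  obtain ⟨h1, h2⟩ := green_L1 hn hk hΩ hsym hsol hr hr'
  have hu : Integrable (S (L2of Ω (sc ρ r x))) (volume.restrict Ω) :=
    (Lp.memLp _).integrable (by norm_num)
  have hd : Integrable (fun z => S (L2of Ω (sc ρ r x)) z - green Ω ρ S x z)
      (volume.restrict Ω) :=
    memLp_one_iff_integrable.1 ⟨hu.1.sub h1, h2.trans_lt ENNReal.ofReal_lt_top⟩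
  refine (hu.sub hd).congr (Eventually.of_forall fun z => ?_)
  simp

theorem green_repr (hn : 0 < n) {ρ ψ : 𝔼 → ℝ} (hk : Ker ρ ψ) {Ω : Set 𝔼} (hΩ : IsOpen Ω)
    [IsFiniteMeasure (volume.restrict Ω)]
    {S : Lp ℝ 2 (volume.restrict Ω) →L[ℝ] Lp ℝ 2 (volume.restrict Ω)}
    (hsym : ∀ f g, ⟪S f, g⟫ = ⟪f, S g⟫)
    (hsol : ∀ f, ∃ w, IsSol Ω f (S f) w) {f : 𝔼 → ℝ} (hf : IsTestFun Ω f) :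
    ∀ᵐ x ∂(volume.restrict Ω), S (L2of Ω f) x = ∫ y in Ω, green Ω ρ S x y * f y := by
  obtain ⟨C, hC⟩ := hf.2.1.exists_bound_of_continuous hf.1.continuous
  have hC0 : 0 ≤ C := (norm_nonneg _).trans (hC 0)
  have hA : 0 ≤ ∫ z, |ψ z| := integral_nonneg fun z => abs_nonneg _
  filter_upwards [ae_avg_tendsto hk hΩ (S (L2of Ω f)),
    ae_restrict_mem hΩ.measurableSet] with x hx hxΩ
  refine tendsto_nhds_unique hx ?_
  have hgi := green_integrable hn hk hΩ hsym hsol hxΩ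
  obtain ⟨r, hr, hr'⟩ := exists_closedBall hΩ hxΩ
  rw [tendsto_iff_norm_sub_tendsto_zero]
  have hlim : Tendsto (fun t : ℝ => t * (∫ z, |ψ z|) * t * C) (𝓝[>] 0) (𝓝 0) := by
    have : Continuous (fun t : ℝ => t * (∫ z, |ψ z|) * t * C) := by fun_prop
    have h := this.tendsto 0
    simp only [zero_mul, mul_zero] at h
    exact h.mono_left nhdsWithin_le_nhds
  refine tendsto_of_tendsto_of_tendsto_of_le_of_le' tendsto_const_nhds hlim
    (Eventually.of_forall fun t => norm_nonneg _) ?_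
  filter_upwards [Ioo_mem_nhdsGT hr] with t ht
  have ht0 : 0 < t := ht.1
  obtain ⟨h1, h2⟩ := green_L1 hn hk hΩ hsym hsol ht.1
    ((closedBall_subset_closedBall ht.2.le).trans hr')
  have hu : Integrable (S (L2of Ω (sc ρ t x))) (volume.restrict Ω) :=
    (Lp.memLp _).integrable (by norm_num)
  have hd : Integrable (fun z => S (L2of Ω (sc ρ t x)) z - green Ω ρ S x z)
      (volume.restrict Ω) := hu.sub hgi
  have hfm : AEStronglyMeasurable f (volume.restrict Ω) := hf.1.continuous.aestronglyMeasurable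
  have hfb : ∀ᵐ z ∂(volume.restrict Ω), ‖f z‖ ≤ C := Eventually.of_forall hC
  rw [hsym, real_inner_comm, inner_L2of _ (testFun_memLp hf 2 Ω),
    ← integral_sub (hu.mul_bdd hfm hfb) (hgi.mul_bdd hfm hfb)]
  have h3 : ∫ z in Ω, ‖S (L2of Ω (sc ρ t x)) z - green Ω ρ S x z‖ ≤ t * (∫ z, |ψ z|) * t := by
    rw [eLpNorm_one_eq_lintegral_enorm, ← ofReal_integral_norm_eq_lintegral_enorm hd,
      ENNReal.ofReal_le_ofReal_iff (by positivity)] at h2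
    exact h2
  calc _ ≤ ∫ z in Ω, ‖S (L2of Ω (sc ρ t x)) z - green Ω ρ S x z‖ * C := by
        refine norm_integral_le_of_norm_le (hd.norm.mul_const C) (Eventually.of_forall fun z => ?_)
        rw [← sub_mul, norm_mul]
        gcongr
        exact hC z
    _ ≤ _ := by
        rw [integral_mul_const]
        gcongr

theorem testFun_memW120 {Ω : Set 𝔼} {v : 𝔼 → ℝ} (h : IsTestFun Ω v) : MemW120 Ω v :=
  ⟨⟨testFun_memLp h 2 Ω, testFun_grad_memLp h 2 Ω⟩, fun _ => v, fun _ => h, by simp⟩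

theorem eq_sol (hn : 0 < n) {Ω : Set 𝔼} (hb : IsBounded Ω)
    {S : Lp ℝ 2 (volume.restrict Ω) →L[ℝ] Lp ℝ 2 (volume.restrict Ω)}
    (hsol : ∀ f, ∃ w, IsSol Ω f (S f) w) {f u : 𝔼 → ℝ} (hf : IsTestFun Ω f) (hu : MemW120 Ω u)
    (hw : ∀ v, IsTestFun Ω v →
        ∫ x in Ω, ⟪gradient u x, gradient v x⟫ = ∫ x in Ω, f x * v x) :
    u =ᵐ[volume.restrict Ω] S (L2of Ω f) := by
  obtain ⟨⟨hu1, hu2⟩, φ, hφ, hlim⟩ := hu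
  have hl1 : Tendsto (fun k => eLpNorm (φ k - u) 2 (volume.restrict Ω)) atTop (𝓝 0) := by
    refine tendsto_of_tendsto_of_tendsto_of_le_of_le tendsto_const_nhds hlim
      (fun _ => zero_le) (fun k => ?_)
    rw [eLpNorm_sub_comm]
    exact le_self_add
  have hl2 : Tendsto (fun k => eLpNorm ((fun x => gradient (φ k) x) - (fun x => gradient u x)) 2
      (volume.restrict Ω)) atTop (𝓝 0) := by
    refine tendsto_of_tendsto_of_tendsto_of_le_of_le tendsto_const_nhds hlim
      (fun _ => zero_le) (fun k => ?_)
    beta_reduce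
    rw [eLpNorm_sub_comm]
    exact le_add_self
  have hs : IsSol Ω (L2of Ω f) (hu1.toLp u) (hu2.toLp _) := by
    refine ⟨⟨fun k => ⟨φ k, hφ k⟩, ?_, ?_⟩, fun v => ?_⟩
    · simp only [tL_apply]
      exact (Lp.tendsto_Lp_iff_tendsto_eLpNorm'' _ (fun k => testFun_memLp (hφ k) 2 Ω) _ hu1).2 hl1
    · simp only [gL_apply]
      exact (Lp.tendsto_Lp_iff_tendsto_eLpNorm'' _ (fun k => testFun_grad_memLp (hφ k) 2 Ω) _
        hu2).2 hl2
    · rw [gL_apply, L2of_TF hf, tL_apply, tL_apply, inner_toLp, inner_toLp, hw _ v.2]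
      simp [mul_comm]
  obtain ⟨w, hw'⟩ := hsol (L2of Ω f)
  rw [← isSol_unique hn hb hs hw']
  exact hu1.coeFn_toLp.symm

theorem fderiv_testFun {Ω : Set 𝔼} {g : 𝔼 → ℝ} (h : IsTestFun Ω g) (e : 𝔼) :
    IsTestFun Ω (fun x => fderiv ℝ g x e) := by
  refine ⟨(h.1.fderiv_right (m := (⊤ : ℕ∞)) (by simp)).clm_apply contDiff_const,
    h.2.1.fderiv_apply (𝕜 := ℝ) e, ?_⟩
  exact (tsupport_fderiv_apply_subset ℝ e).trans h.2.2

theorem integrable_mul_test {Ω : Set 𝔼} {a g : 𝔼 → ℝ} (hg : IsTestFun Ω g)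
    (ha : ∀ x ∈ Ω, ContinuousAt a x) : Integrable (fun x => a x * g x) volume := by
  refine Continuous.integrable_of_hasCompactSupport ?_ hg.2.1.mul_left
  refine continuous_of_tsupport fun x hx => ?_
  exact (ha x (hg.2.2 (tsupport_mul_subset_right hx))).mul hg.1.continuous.continuousAt

theorem ibp {Ω : Set 𝔼} {v g : 𝔼 → ℝ} (hv : ∀ x ∈ Ω, ContDiffAt ℝ (⊤ : ℕ∞) v x)
    (hg : IsTestFun Ω g) (e : 𝔼) :
    ∫ x, fderiv ℝ v x e * g x = -∫ x, v x * fderiv ℝ g x e := by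
  have hfd : ∀ x ∈ Ω, ContinuousAt (fun x => fderiv ℝ v x e) x := fun x hx =>
    (((hv x hx).fderiv_right (m := (⊤ : ℕ∞)) (by simp)).continuousAt).clm_apply continuousAt_const
  have hvc : ∀ x ∈ Ω, ContinuousAt v x := fun x hx => (hv x hx).continuousAt
  have := integral_mul_fderiv_eq_neg_fderiv_mul_of_integrable (μ := (volume : Measure 𝔼))
    (f := v) (g := g) (v := e) (integrable_mul_test hg hfd)
    (integrable_mul_test (fderiv_testFun hg e) hvc) (integrable_mul_test hg hvc)
    (fun x hx => (hv x (hg.2.2 hx)).differentiableAt (by simp))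
    (fun x _ => testFun_differentiable hg x)
  rw [this, neg_neg]

theorem gradient_eq_of_approx {Ω : Set 𝔼} (hΩ : IsOpen Ω) [IsFiniteMeasure (volume.restrict Ω)]
    {v : 𝔼 → ℝ} (hv : ∀ x ∈ Ω, ContDiffAt ℝ (⊤ : ℕ∞) v x) {φ : ℕ → TF Ω}
    {V : Lp ℝ 2 (volume.restrict Ω)} {Q : Lp 𝔼 2 (volume.restrict Ω)}
    (h1 : Tendsto (fun k => tL Ω (φ k)) atTop (𝓝 V))
    (h2 : Tendsto (fun k => gL Ω (φ k)) atTop (𝓝 Q)) (hV : v =ᵐ[volume.restrict Ω] V) :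
    (fun x => gradient v x) =ᵐ[volume.restrict Ω] Q := by
  have hgc : ContinuousOn (fun x => gradient v x) Ω := fun x hx =>
    (((InnerProductSpace.toDual ℝ 𝔼).symm.continuous.continuousAt).comp
      ((hv x hx).fderiv_right (m := (⊤ : ℕ∞)) (by simp)).continuousAt).continuousWithinAt
  have hQi : IntegrableOn Q Ω := (Lp.memLp Q).integrable (by norm_num)
  have hli1 : LocallyIntegrableOn (fun x => gradient v x) Ω volume :=
    hgc.locallyIntegrableOn hΩ.measurableSet
  have hli : LocallyIntegrableOn (fun x => gradient v x - Q x) Ω volume :=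
    hli1.sub hQi.locallyIntegrableOn
  suffices h : ∀ᵐ x ∂(volume : Measure 𝔼), x ∈ Ω → gradient v x - Q x = 0 by
    rw [Filter.EventuallyEq, ae_restrict_iff' hΩ.measurableSet]
    filter_upwards [h] with x hx hxΩ
    exact sub_eq_zero.1 (hx hxΩ)
  refine hΩ.ae_eq_zero_of_integral_contDiff_smul_eq_zero hli fun g hg hgc' hgΩ => ?_
  have hgt : IsTestFun Ω g := ⟨hg, hgc', hgΩ⟩
  obtain ⟨C, hC⟩ := hgc'.exists_bound_of_continuous hg.continuous
  have hz : ∀ x, x ∉ tsupport g → g x • (gradient v x - Q x) = 0 := fun x hx => by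
    rw [image_eq_zero_of_notMem_tsupport hx, zero_smul]
  rw [← setIntegral_eq_of_tsupport hgΩ hz]
  have hi1 : Integrable (fun x => g x • gradient v x) (volume.restrict Ω) := by
    refine Integrable.restrict (Continuous.integrable_of_hasCompactSupport ?_ hgc'.smul_right)
    refine continuous_of_tsupport fun x hx => ?_
    exact hg.continuous.continuousAt.smul ((hgc.continuousAt (hΩ.mem_nhds
      (hgΩ (tsupport_smul_subset_left _ _ hx)))))
  have hi2 : Integrable (fun x => g x • Q x) (volume.restrict Ω) :=
    Integrable.bdd_smul hQi C hg.continuous.aestronglyMeasurable (Eventually.of_forall hC)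
  have hi : Integrable (fun x => g x • (gradient v x - Q x)) (volume.restrict Ω) := by
    refine (hi1.sub hi2).congr (Eventually.of_forall fun x => ?_)
    simp [smul_sub]
  refine ext_inner_left ℝ fun e => ?_
  rw [inner_zero_right, ← integral_inner hi]
  have hget : IsTestFun Ω (fun x => fderiv ℝ g x e) := fderiv_testFun hgt e
  have hgm : MemLp (fun x => g x • e) 2 (volume.restrict Ω) :=
    ((hg.continuous.smul continuous_const).memLp_of_hasCompactSupport hgc'.smul_right).restrict Ω
  have hk : ∀ k, ⟪gL Ω (φ k), hgm.toLp _⟫ = -⟪tL Ω (φ k), L2of Ω (fun x => fderiv ℝ g x e)⟫ := by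
    intro k
    rw [L2of_TF hget, inner_tL, gL_apply, inner_toLp, setIntegral_eq_of_tsupport (φ := g) hgΩ,
      ← ibp (Ω := Ω) (fun x _ => (φ k).2.1.contDiffAt) hgt e]
    · congr 1
      ext x
      rw [inner_smul_right, inner_gradient, mul_comm]
    · intro x hx
      simp [image_eq_zero_of_notMem_tsupport hx]
  have hQ : ⟪Q, hgm.toLp _⟫ = -⟪V, L2of Ω (fun x => fderiv ℝ g x e)⟫ := by
    refine tendsto_nhds_unique (h2.inner tendsto_const_nhds) ?_
    simp_rw [hk]
    exact (h1.inner tendsto_const_nhds).neg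
  have e1 : ⟪Q, hgm.toLp _⟫ = ∫ x in Ω, ⟪e, g x • Q x⟫ := by
    rw [L2.inner_def]
    apply integral_congr_ae
    filter_upwards [hgm.coeFn_toLp] with x hx
    rw [hx, inner_smul_right, inner_smul_right, real_inner_comm]
  have e2 : ⟪V, L2of Ω (fun x => fderiv ℝ g x e)⟫ = -∫ x in Ω, ⟪e, g x • gradient v x⟫ := by
    have hz1 : ∀ x, x ∉ tsupport g → ⟪e, g x • gradient v x⟫ = 0 := fun x hx => by
      simp [image_eq_zero_of_notMem_tsupport hx]
    have hz2 : ∀ x, x ∉ tsupport g → v x * fderiv ℝ g x e = 0 := fun x hx => by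
      rw [← inner_gradient, gradient_eq_zero_of_notMem hx]; simp
    have h3 : ∫ x, ⟪e, g x • gradient v x⟫ = ∫ x, fderiv ℝ v x e * g x := by
      congr 1
      ext x
      rw [inner_smul_right, real_inner_comm, inner_gradient, mul_comm]
    rw [inner_L2of _ (testFun_memLp hget 2 Ω), setIntegral_eq_of_tsupport hgΩ hz1, h3,
      ibp hv hgt e, neg_neg, ← setIntegral_eq_of_tsupport hgΩ hz2]
    apply integral_congr_ae
    filter_upwards [hV] with x hx
    rw [hx]
  have e3 : ∫ x in Ω, ⟪e, g x • (gradient v x - Q x)⟫ =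
      (∫ x in Ω, ⟪e, g x • gradient v x⟫) - ∫ x in Ω, ⟪e, g x • Q x⟫ := by
    rw [← integral_sub (hi1.const_inner e) (hi2.const_inner e)]
    simp only [smul_sub, inner_sub_right]
  rw [e3, ← e1, hQ, e2]
  ring

theorem memW120_of_approx {Ω : Set 𝔼} (hΩ : IsOpen Ω) [IsFiniteMeasure (volume.restrict Ω)]
    {v : 𝔼 → ℝ} (hv : ∀ x ∈ Ω, ContDiffAt ℝ (⊤ : ℕ∞) v x) {φ : ℕ → TF Ω}
    {V : Lp ℝ 2 (volume.restrict Ω)} {Q : Lp 𝔼 2 (volume.restrict Ω)}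
    (h1 : Tendsto (fun k => tL Ω (φ k)) atTop (𝓝 V))
    (h2 : Tendsto (fun k => gL Ω (φ k)) atTop (𝓝 Q)) (hV : v =ᵐ[volume.restrict Ω] V) :
    MemW120 Ω v := by
  have hg := gradient_eq_of_approx hΩ hv h1 h2 hV
  refine ⟨⟨(memLp_congr_ae hV).2 (Lp.memLp V), (memLp_congr_ae hg).2 (Lp.memLp Q)⟩,
    fun k => (φ k).1, fun k => (φ k).2, ?_⟩
  rw [Lp.tendsto_Lp_iff_tendsto_eLpNorm'] at h1 h2
  have h3 := h1.add h2
  rw [add_zero] at h3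
  refine h3.congr fun k => ?_
  congr 1
  · rw [eLpNorm_sub_comm]
    apply eLpNorm_congr_ae
    filter_upwards [hV, (testFun_memLp (φ k).2 2 Ω).coeFn_toLp] with x hx hx'
    rw [Pi.sub_apply, hx, tL_apply, hx']
  · rw [eLpNorm_sub_comm]
    apply eLpNorm_congr_ae
    filter_upwards [hg, (testFun_grad_memLp (φ k).2 2 Ω).coeFn_toLp] with x hx hx'
    rw [Pi.sub_apply, hx, gL_apply, hx']

theorem gradient_mul' {a φ : 𝔼 → ℝ} {x : 𝔼} (ha : DifferentiableAt ℝ a x)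
    (hφ : DifferentiableAt ℝ φ x) :
    gradient (fun x => a x * φ x) x = a x • gradient φ x + φ x • gradient a x := by
  refine ext_inner_right ℝ fun v => ?_
  rw [inner_add_left, inner_smul_left, inner_smul_left, inner_gradient, inner_gradient,
    inner_gradient, fderiv_fun_mul ha hφ]
  simp

theorem green_cutoff {ρ ψ : 𝔼 → ℝ} (hk : Ker ρ ψ) {Ω : Set 𝔼} (hΩ : IsOpen Ω)
    [IsFiniteMeasure (volume.restrict Ω)]
    {S : Lp ℝ 2 (volume.restrict Ω) →L[ℝ] Lp ℝ 2 (volume.restrict Ω)}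
    (hsym : ∀ f g, ⟪S f, g⟫ = ⟪f, S g⟫)
    (hsol : ∀ f, ∃ w, IsSol Ω f (S f) w) {y : 𝔼} (hy : y ∈ Ω) {η : 𝔼 → ℝ}
    (hη : ContDiff ℝ (⊤ : ℕ∞) η) (hηc : HasCompactSupport η) {ε : ℝ} (hε : 0 < ε)
    (hη1 : EqOn η 1 (ball y ε)) : MemW120 Ω (fun x => (1 - η x) * green Ω ρ S x y) := by
  obtain ⟨r, hr, hrΩ⟩ := exists_closedBall hΩ hy
  set s := min r (ε / 2) with hs
  have hs0 : 0 < s := lt_min hr (half_pos hε)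
  have hsε : s < ε := (min_le_right _ _).trans_lt (half_lt_self hε)
  have hsΩ : closedBall y s ⊆ Ω := (closedBall_subset_closedBall (min_le_left _ _)).trans hrΩ
  set u := S (L2of Ω (sc ρ s y)) with hu
  obtain ⟨w, hw⟩ := hsol (L2of Ω (sc ρ s y))
  obtain ⟨φ, h1, h2⟩ := hw.approx
  let a : 𝔼 → ℝ := fun x => 1 - η x
  have ha : ContDiff ℝ (⊤ : ℕ∞) a := contDiff_const.sub hη
  have had : Differentiable ℝ a := ha.differentiable (by simp)
  have hga : ∀ x, gradient a x = -gradient η x := fun x => by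
    refine ext_inner_right ℝ fun v => ?_
    rw [inner_neg_left, inner_gradient, inner_gradient]
    simp [a, fderiv_const_sub]
  obtain ⟨C, hC⟩ := hηc.exists_bound_of_continuous hη.continuous
  obtain ⟨D, hD⟩ := (testFun_grad_supp hηc).exists_bound_of_continuous (testFun_grad_cont hη)
  have ham : MemLp a ∞ (volume.restrict Ω) :=
    memLp_top_of_bound ha.continuous.aestronglyMeasurable (1 + C) (Eventually.of_forall fun x =>
      (norm_sub_le _ _).trans (by simpa using hC x))
  have hbm : MemLp (fun x => gradient a x) ∞ (volume.restrict Ω) :=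
    memLp_top_of_bound (testFun_grad_cont ha).aestronglyMeasurable D (Eventually.of_forall fun x =>
      by rw [hga, norm_neg]; exact hD x)
  let B1 : ℝ →L[ℝ] ℝ →L[ℝ] ℝ := ContinuousLinearMap.mul ℝ ℝ
  let B2 : ℝ →L[ℝ] 𝔼 →L[ℝ] 𝔼 := ContinuousLinearMap.lsmul ℝ ℝ
  let M1 := B1.holderL (volume.restrict Ω) ∞ 2 2 (ham.toLp a)
  let M2 := B2.holderL (volume.restrict Ω) ∞ 2 2 (ham.toLp a)
  let M3 := B2.flip.holderL (volume.restrict Ω) ∞ 2 2 (hbm.toLp _)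
  have hM1 : ∀ f, M1 f =ᵐ[volume.restrict Ω] fun x => a x * f x := fun f => by
    filter_upwards [B1.coeFn_holder (r := 2) (ham.toLp a) f, ham.coeFn_toLp] with x hx hx'
    change (B1.holder 2 (ham.toLp a) f) x = _
    rw [hx, hx']; rfl
  have hM2 : ∀ f, M2 f =ᵐ[volume.restrict Ω] fun x => a x • f x := fun f => by
    filter_upwards [B2.coeFn_holder (r := 2) (ham.toLp a) f, ham.coeFn_toLp] with x hx hx'
    change (B2.holder 2 (ham.toLp a) f) x = _
    rw [hx, hx']; rfl
  have hM3 : ∀ f, M3 f =ᵐ[volume.restrict Ω] fun x => f x • gradient a x := fun f => by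
    filter_upwards [B2.flip.coeFn_holder (r := 2) (hbm.toLp _) f, hbm.coeFn_toLp] with x hx hx'
    change (B2.flip.holder 2 (hbm.toLp _) f) x = _
    rw [hx, hx']; rfl
  let Φ : ℕ → TF Ω := fun k => ⟨fun x => a x * (φ k).1 x, testFun_mul ha (φ k).2⟩
  have hΦ1 : ∀ k, tL Ω (Φ k) = M1 (tL Ω (φ k)) := fun k => by
    refine Lp.ext ?_
    filter_upwards [(testFun_memLp (Φ k).2 2 Ω).coeFn_toLp, hM1 (tL Ω (φ k)),
      (testFun_memLp (φ k).2 2 Ω).coeFn_toLp] with x e1 e2 e3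
    rw [e2, tL_apply, tL_apply, e1, e3]
  have hΦ2 : ∀ k, gL Ω (Φ k) = M2 (gL Ω (φ k)) + M3 (tL Ω (φ k)) := fun k => by
    refine Lp.ext ?_
    filter_upwards [(testFun_grad_memLp (Φ k).2 2 Ω).coeFn_toLp, hM2 (gL Ω (φ k)),
      hM3 (tL Ω (φ k)), (testFun_memLp (φ k).2 2 Ω).coeFn_toLp,
      (testFun_grad_memLp (φ k).2 2 Ω).coeFn_toLp,
      Lp.coeFn_add (M2 (gL Ω (φ k))) (M3 (tL Ω (φ k)))] with x e1 e2 e3 e4 e5 e6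
    rw [e6, Pi.add_apply, e2, e3, tL_apply, gL_apply, gL_apply, e1, e4, e5]
    exact gradient_mul' (had x) (testFun_differentiable (φ k).2 x)
  have l1 : Tendsto (fun k => tL Ω (Φ k)) atTop (𝓝 (M1 u)) := by
    simp_rw [hΦ1]
    exact (M1.continuous.tendsto u).comp h1
  have l2 : Tendsto (fun k => gL Ω (Φ k)) atTop (𝓝 (M2 w + M3 u)) := by
    simp_rw [hΦ2]
    exact ((M2.continuous.tendsto w).comp h2).add ((M3.continuous.tendsto u).comp h1)
  refine memW120_of_approx hΩ (fun x hx => ?_) l1 l2 ?_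
  · by_cases hxy : x = y
    · subst hxy
      refine (contDiffAt_const (c := (0 : ℝ))).congr_of_eventuallyEq ?_
      filter_upwards [ball_mem_nhds x hε] with z hz
      simp [hη1 hz]
    · have hG := green_contDiffAt hk hΩ hsym hsol hx hy hxy
      have hG' : ContDiffAt ℝ (⊤ : ℕ∞) (fun x => green Ω ρ S x y) x :=
        ContDiffAt.comp x (g := fun p : 𝔼 × 𝔼 => green Ω ρ S p.1 p.2) (f := fun x => (x, y)) hG
          (contDiffAt_id.prodMk contDiffAt_const)
      exact ha.contDiffAt.mul hG'
  · filter_upwards [hM1 u, green_ae hk hΩ hsym hsol hs0 hsΩ,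
      ae_restrict_mem hΩ.measurableSet] with x e1 e2 hx
    rw [e1]
    change a x * _ = _
    by_cases hd : s < dist y x
    · have hne : x ≠ y := by
        rintro rfl
        rw [dist_self] at hd
        exact absurd hd hs0.le.not_gt
      rw [green_symm hk hΩ hsym hsol hx hy hne, ← e2 hd]
    · have hxb : x ∈ ball y ε := by
        rw [mem_ball']
        exact (not_lt.1 hd).trans_lt hsε
      have : a x = 0 := by simp [a, hη1 hxb]
      rw [this, zero_mul, zero_mul]

theorem no_zero_dim {Ω : Set 𝔼} (hn : n = 0) (hΩne : Ω.Nonempty)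
    (T : (𝔼 → ℝ) → (𝔼 → ℝ))
    (hT : ∀ f, IsTestFun Ω f → MemW120 Ω (T f) ∧
      ∀ v, MemW120 Ω v →
        ∫ x in Ω, ⟪gradient (T f) x, gradient v x⟫ = ∫ x in Ω, f x * v x) : False := by
  subst hn
  have hΩ : Ω = univ := by
    obtain ⟨x, hx⟩ := hΩne
    exact eq_univ_of_forall fun y => by rwa [Subsingleton.elim y x]
  have h1 : IsTestFun Ω (fun _ => (1 : ℝ)) :=
    ⟨contDiff_const, HasCompactSupport.of_compactSpace _, by simp [hΩ]⟩
  have h := (hT _ h1).2 _ (testFun_memW120 h1)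
  have hg : ∀ f : EuclideanSpace ℝ (Fin 0) → ℝ, ∀ x, gradient f x = 0 := fun f x =>
    Subsingleton.elim _ _
  simp only [hg, inner_zero_right, integral_zero, mul_one, hΩ, Measure.restrict_univ] at h
  rw [integral_const, smul_eq_mul, mul_one] at h
  have hpos : 0 < (volume : Measure (EuclideanSpace ℝ (Fin 0))).real univ := by
    have : (univ : Set (EuclideanSpace ℝ (Fin 0))) = ball 0 1 := by
      symm
      exact eq_univ_of_forall fun y => by rw [Subsingleton.elim y 0]; exact mem_ball_self one_pos
    rw [this]
    exact ENNReal.toReal_pos (measure_ball_pos _ _ one_pos).ne' measure_ball_lt_top.ne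
  exact hpos.ne h

theorem main_aux
    (Ω : Set (EuclideanSpace ℝ (Fin n)))
    (hΩo : IsOpen Ω) (hΩconn : IsConnected Ω) (hΩbd : IsBounded Ω)
    (T : (EuclideanSpace ℝ (Fin n) → ℝ) → (EuclideanSpace ℝ (Fin n) → ℝ))
    (hT : ∀ f, IsTestFun Ω f → MemW120 Ω (T f) ∧
      ∀ v, MemW120 Ω v →
        ∫ x in Ω, ⟪gradient (T f) x, gradient v x⟫ = ∫ x in Ω, f x * v x) :
    ∃ G : EuclideanSpace ℝ (Fin n) → EuclideanSpace ℝ (Fin n) → ℝ,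
      ContDiffOn ℝ (⊤ : ℕ∞) (fun p : EuclideanSpace ℝ (Fin n) × EuclideanSpace ℝ (Fin n) => G p.1 p.2)
        ((Ω ×ˢ Ω) \ {p | p.1 = p.2}) ∧
      (∀ y ∈ Ω, ∀ ηy : EuclideanSpace ℝ (Fin n) → ℝ,
        ContDiff ℝ (⊤ : ℕ∞) ηy → HasCompactSupport ηy → tsupport ηy ⊆ Ω → (∀ x, 0 ≤ ηy x) →
        (∃ ε > (0 : ℝ), Set.EqOn ηy 1 (ball y ε)) →
        MemW120 Ω (fun x => (1 - ηy x) * G x y)) ∧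
      (∀ x ∈ Ω, ∀ y ∈ Ω, y ≠ x → G x y = G y x) ∧
      (∀ x ∈ Ω, IntegrableOn (fun y => G x y) Ω) ∧
      (∀ f, IsTestFun Ω f →
        ∀ᵐ x ∂(volume.restrict Ω), T f x = ∫ y in Ω, G x y * f y) := by
  rcases Nat.eq_zero_or_pos n with hn | hn
  · exact (no_zero_dim hn hΩconn.nonempty T hT).elim
  have : IsFiniteMeasure (volume.restrict Ω) := ⟨by simpa using hΩbd.measure_lt_top⟩
  obtain ⟨ρ, ψ, hk⟩ := exists_ker hn
  obtain ⟨S, hsym, hsol⟩ := exists_solution_operator hn hΩbd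
  refine ⟨green Ω ρ S, ?_, ?_, ?_, ?_, ?_⟩
  · rintro ⟨x, y⟩ ⟨⟨hx, hy⟩, hxy⟩
    exact (green_contDiffAt hk hΩo hsym hsol hx hy hxy).contDiffWithinAt
  · rintro y hy η hη hηc - - ⟨ε, hε, hη1⟩
    exact green_cutoff hk hΩo hsym hsol hy hη hηc hε hη1
  · intro x hx y hy hxy
    exact green_symm hk hΩo hsym hsol hx hy hxy.symm
  · intro x hx
    exact green_integrable hn hk hΩo hsym hsol hx
  · intro f hf
    obtain ⟨h1, h2⟩ := hT f hf
    have h3 := eq_sol hn hΩbd hsol hf h1 (fun v hv => h2 v (testFun_memW120 hv))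
    filter_upwards [h3, green_repr hn hk hΩo hsym hsol hf] with x e1 e2
    rw [e1, e2]

/-- **Existence of the Dirichlet Green's function** (Shen, Theorem 1.2.2): for a bounded
domain `Ω` and the weak solution operator `T`, there is a kernel `G(x,y)` on `Ω × Ω` that is
(a) smooth off the diagonal, (b) in `W^{1,2}_0(Ω)` after cutting off around the pole,
(c) symmetric, and (d) integrable in the second variable and representing `T` on
`C_c^∞(Ω)` data. -/
theorem dirichlet_green_function_exists
    (Ω : Set (EuclideanSpace ℝ (Fin n)))
    (hΩo : IsOpen Ω) (hΩconn : IsConnected Ω) (hΩbd : IsBounded Ω)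
    (T : (EuclideanSpace ℝ (Fin n) → ℝ) → (EuclideanSpace ℝ (Fin n) → ℝ))
    (hT : ∀ f, IsTestFun Ω f → MemW120 Ω (T f) ∧
      ∀ v, MemW120 Ω v →
        ∫ x in Ω, ⟪gradient (T f) x, gradient v x⟫ = ∫ x in Ω, f x * v x) :
    ∃ G : EuclideanSpace ℝ (Fin n) → EuclideanSpace ℝ (Fin n) → ℝ,
      -- (a) smooth off the diagonal
      ContDiffOn ℝ (⊤ : ℕ∞) (fun p : EuclideanSpace ℝ (Fin n) × EuclideanSpace ℝ (Fin n) => G p.1 p.2)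
        ((Ω ×ˢ Ω) \ {p | p.1 = p.2}) ∧
      -- (b) zero boundary values away from the pole
      (∀ y ∈ Ω, ∀ ηy : EuclideanSpace ℝ (Fin n) → ℝ,
        ContDiff ℝ (⊤ : ℕ∞) ηy → HasCompactSupport ηy → tsupport ηy ⊆ Ω → (∀ x, 0 ≤ ηy x) →
        (∃ ε > (0 : ℝ), Set.EqOn ηy 1 (ball y ε)) →
        MemW120 Ω (fun x => (1 - ηy x) * G x y)) ∧
      -- (c) symmetry
      (∀ x ∈ Ω, ∀ y ∈ Ω, y ≠ x → G x y = G y x) ∧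
      -- (d) integrability and representation of `T` on smooth compactly supported data
      (∀ x ∈ Ω, IntegrableOn (fun y => G x y) Ω) ∧
      (∀ f, IsTestFun Ω f →
        ∀ᵐ x ∂(volume.restrict Ω), T f x = ∫ y in Ω, G x y * f y) := by
  exact main_aux Ω hΩo hΩconn hΩbd T hT
end
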